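/- Four distinct spheres in ℝ³ whose centers are not collinear have at most twelve common tangent lines. -/

import Mathlib

noncomputable section

abbrev Pt3 := EuclideanSpace ℝ (Fin 3)

/-- The line through `a` with direction `v` (assumed nonzero where relevant). -/
def lineThrough3 (a v : Pt3) : Set Pt3 := {x : Pt3 | ∃ t : ℝ, x = a + t • v}

/-- A line in space. -/
def IsLine3 (l : Set Pt3) : Prop := ∃ a v : Pt3, v ≠ 0 ∧ l = lineThrough3 a v

/-- Two subsets of space are tangent if they intersect in exactly one point. -/
def Tangent3 (a b : Set Pt3) : Prop := ∃ p : Pt3, a ∩ b = {p}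

section
open MvPolynomial

lemma card_deg3 (m : ℕ) : (Finset.finsuppAntidiag (Finset.univ : Finset (Fin 3)) m).card = (m+2).choose m := by
  rw [Finset.card_finsuppAntidiag_nat_eq_choose]
  simp
  congr 1
  omega

lemma mem_antidiag3 (m : ℕ) (d : Fin 3 →₀ ℕ) :
    d ∈ Finset.finsuppAntidiag (Finset.univ : Finset (Fin 3)) m ↔ d.degree = m := by
  rw [Finset.mem_finsuppAntidiag, Finsupp.degree_eq_sum]
  simp

noncomputable def coeffEquiv3 (m : ℕ) : homogeneousSubmodule (Fin 3) ℝ m ≃ₗ[ℝ]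
    (Finset.finsuppAntidiag (Finset.univ : Finset (Fin 3)) m → ℝ) :=
  LinearEquiv.ofBijective
    (LinearMap.pi (fun d => (MvPolynomial.lcoeff ℝ d.1).comp (Submodule.subtype _)))
    (by
      constructor
      · intro φ ψ h
        ext d
        by_cases hd : d.degree = m
        · have := congrFun h ⟨d, (mem_antidiag3 m d).2 hd⟩
          simpa using this
        · rw [IsHomogeneous.coeff_eq_zero ((mem_homogeneousSubmodule _ _).1 φ.2) hd,
            IsHomogeneous.coeff_eq_zero ((mem_homogeneousSubmodule _ _).1 ψ.2) hd]
      · intro f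
        refine ⟨⟨∑ d, monomial d.1 (f d), ?_⟩, ?_⟩
        · rw [mem_homogeneousSubmodule]
          exact IsHomogeneous.sum _ _ _ fun d _ =>
            isHomogeneous_monomial _ ((mem_antidiag3 m d.1).1 d.2)
        · ext d
          simp only [LinearMap.pi_apply, LinearMap.comp_apply, Submodule.subtype_apply, lcoeff_apply, coeff_sum, coeff_monomial]
          rw [Finset.sum_eq_single d]
          · simp
          · intro b _ hb
            rw [if_neg (fun h => hb (Subtype.ext h))]
          · simp)

instance (m : ℕ) : FiniteDimensional ℝ (homogeneousSubmodule (Fin 3) ℝ m) :=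
  Module.Finite.equiv (coeffEquiv3 m).symm

lemma finrank3 (m : ℕ) : Module.finrank ℝ (homogeneousSubmodule (Fin 3) ℝ m) = (m+2).choose m := by
  rw [(coeffEquiv3 m).finrank_eq, Module.finrank_fintype_fun_eq_card, Fintype.card_coe, card_deg3]

lemma homComp_mul_top {R : Type*} [CommRing R] (g h : MvPolynomial (Fin 3) R) (a b : ℕ)
    (hg : g.totalDegree ≤ a) (hh : h.totalDegree ≤ b) :
    homogeneousComponent (a+b) (g*h) = homogeneousComponent a g * homogeneousComponent b h := by
  ext d
  rw [coeff_homogeneousComponent]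
  split_ifs with hd
  · rw [coeff_mul, coeff_mul]
    refine Finset.sum_congr rfl ?_
    rintro ⟨x, y⟩ hxy
    rw [Finset.HasAntidiagonal.mem_antidiagonal] at hxy
    dsimp only
    have hs : x.degree + y.degree = a + b := by
      rw [← hd, ← hxy]; simp
    rw [coeff_homogeneousComponent, coeff_homogeneousComponent]
    by_cases h1 : x.degree = a
    · rw [if_pos h1, if_pos (by omega)]
    · rw [if_neg h1]
      rcases lt_or_gt_of_ne h1 with h2 | h2
      · have : coeff y h = 0 := coeff_eq_zero_of_totalDegree_lt (by
          rw [← Finsupp.degree_apply]; omega)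
        simp [this]
      · have : coeff x g = 0 := coeff_eq_zero_of_totalDegree_lt (by
          rw [← Finsupp.degree_apply]; omega)
        simp [this]
  · symm
    apply IsHomogeneous.coeff_eq_zero _ hd
    exact (homogeneousComponent_isHomogeneous _ _).mul (homogeneousComponent_isHomogeneous _ _)

lemma homComp_mul_left {R : Type*} [CommRing R] (g h : MvPolynomial (Fin 3) R) (a b : ℕ)
    (hg : g.IsHomogeneous a) :
    homogeneousComponent (a+b) (g*h) = g * homogeneousComponent b h := by
  ext d
  rw [coeff_homogeneousComponent]
  split_ifs with hd
  · rw [coeff_mul, coeff_mul]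
    refine Finset.sum_congr rfl ?_
    rintro ⟨x, y⟩ hxy
    rw [Finset.HasAntidiagonal.mem_antidiagonal] at hxy
    dsimp only
    have hs : x.degree + y.degree = a + b := by
      rw [← hd, ← hxy]; simp
    rw [coeff_homogeneousComponent]
    by_cases h1 : x.degree = a
    · rw [if_pos (by omega)]
    · rw [hg.coeff_eq_zero h1]; simp
  · symm
    apply IsHomogeneous.coeff_eq_zero _ hd
    exact hg.mul (homogeneousComponent_isHomogeneous _ _)

noncomputable def mulHom (F : MvPolynomial (Fin 3) ℝ) (a b c : ℕ) (hF : F.IsHomogeneous a) (h : b + a = c) :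
    homogeneousSubmodule (Fin 3) ℝ b →ₗ[ℝ] homogeneousSubmodule (Fin 3) ℝ c :=
  ((LinearMap.mulRight ℝ F).comp (Submodule.subtype _)).codRestrict _ (fun x => by
    rw [mem_homogeneousSubmodule]
    subst h
    exact ((mem_homogeneousSubmodule _ _).1 x.2).mul hF)

lemma mulHom_coe (F : MvPolynomial (Fin 3) ℝ) (a b c : ℕ) (hF : F.IsHomogeneous a) (h : b + a = c) (x) :
    (mulHom F a b c hF h x : MvPolynomial (Fin 3) ℝ) = x * F := rfl

/-- linear form separating two points -/
noncomputable def sepForm (v w : Fin 3 → ℝ) : MvPolynomial (Fin 3) ℝ :=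
  ∑ l, C ((∑ i, v i * w i) * w l - (∑ i, w i * w i) * v l) * X l

lemma sepForm_hom (v w : Fin 3 → ℝ) : (sepForm v w).IsHomogeneous 1 :=
  IsHomogeneous.sum _ _ _ fun _ _ => isHomogeneous_C_mul_X _ _

lemma sepForm_right (v w : Fin 3 → ℝ) : eval w (sepForm v w) = 0 := by
  simp [sepForm, Fin.sum_univ_three]; ring

lemma sepForm_left (v w : Fin 3 → ℝ) (hw : w ≠ 0) (h : ∀ s : ℝ, v ≠ s • w) :
    eval v (sepForm v w) ≠ 0 := by
  intro h0
  simp [sepForm, Fin.sum_univ_three] at h0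
  have e : (v 0 * w 1 - v 1 * w 0)^2 + (v 0 * w 2 - v 2 * w 0)^2 + (v 1 * w 2 - v 2 * w 1)^2 = 0 := by
    linear_combination -h0
  have e1 : v 0 * w 1 - v 1 * w 0 = 0 := by
    have := sq_nonneg (v 0 * w 1 - v 1 * w 0)
    have := sq_nonneg (v 0 * w 2 - v 2 * w 0)
    have := sq_nonneg (v 1 * w 2 - v 2 * w 1)
    exact pow_eq_zero_iff (two_ne_zero) |>.1 (by linarith)
  have e2 : v 0 * w 2 - v 2 * w 0 = 0 := by
    have := sq_nonneg (v 0 * w 1 - v 1 * w 0)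
    have := sq_nonneg (v 0 * w 2 - v 2 * w 0)
    have := sq_nonneg (v 1 * w 2 - v 2 * w 1)
    exact pow_eq_zero_iff (two_ne_zero) |>.1 (by linarith)
  have e3 : v 1 * w 2 - v 2 * w 1 = 0 := by
    have := sq_nonneg (v 0 * w 1 - v 1 * w 0)
    have := sq_nonneg (v 0 * w 2 - v 2 * w 0)
    have := sq_nonneg (v 1 * w 2 - v 2 * w 1)
    exact pow_eq_zero_iff (two_ne_zero) |>.1 (by linarith)
  obtain ⟨i, hi⟩ : ∃ i, w i ≠ 0 := by
    by_contra! hc; exact hw (funext hc)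
  apply h (v i / w i)
  funext j
  simp only [Pi.smul_apply, smul_eq_mul]
  field_simp
  fin_cases i <;> fin_cases j <;> simp <;> linarith

theorem bezout34 (P Q : MvPolynomial (Fin 3) ℝ) (hP : P.IsHomogeneous 3) (hQ : Q.IsHomogeneous 4)
    (hrel : IsRelPrime P Q) (v : Fin 13 → Fin 3 → ℝ) (hv : ∀ i, v i ≠ 0)
    (hind : ∀ i j, i ≠ j → ∀ s : ℝ, v i ≠ s • v j)
    (hvP : ∀ i, eval (v i) P = 0) (hvQ : ∀ i, eval (v i) Q = 0) : False := by
  have hQ0 : Q ≠ 0 := by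
    rintro rfl
    have hu : IsUnit P := hrel dvd_rfl (dvd_zero _)
    have := hu.map (eval (v 0))
    rw [hvP 0] at this
    exact not_isUnit_zero this
  let Ψ : (homogeneousSubmodule (Fin 3) ℝ 9 × homogeneousSubmodule (Fin 3) ℝ 8) →ₗ[ℝ]
      homogeneousSubmodule (Fin 3) ℝ 12 :=
    (mulHom P 3 9 12 hP rfl).coprod (mulHom Q 4 8 12 hQ rfl)
  let E : homogeneousSubmodule (Fin 3) ℝ 12 →ₗ[ℝ] (Fin 13 → ℝ) :=
    LinearMap.pi (fun i => ((MvPolynomial.aeval (v i)).toLinearMap).comp (Submodule.subtype _))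
  let Θ : homogeneousSubmodule (Fin 3) ℝ 5 →ₗ[ℝ]
      (homogeneousSubmodule (Fin 3) ℝ 9 × homogeneousSubmodule (Fin 3) ℝ 8) :=
    (mulHom Q 4 5 9 hQ rfl).prod (-(mulHom P 3 5 8 hP rfl))
  have hEval : ∀ x i, E x i = eval (v i) (x : MvPolynomial (Fin 3) ℝ) := by
    intro x i
    simp [E, MvPolynomial.aeval_eq_eval]
  have hE : Function.Surjective E := by
    rw [← LinearMap.range_eq_top, eq_top_iff, ← (Pi.basisFun ℝ (Fin 13)).span_eq, Submodule.span_le]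
    rintro _ ⟨i, rfl⟩
    have hh : (∏ j ∈ Finset.univ.erase i, sepForm (v i) (v j)).IsHomogeneous 12 := by
      have := IsHomogeneous.prod (Finset.univ.erase i) (fun j => sepForm (v i) (v j)) (fun _ => 1)
        (fun j _ => sepForm_hom _ _)
      simpa using this
    have hne : eval (v i) (∏ j ∈ Finset.univ.erase i, sepForm (v i) (v j)) ≠ 0 := by
      rw [map_prod, Finset.prod_ne_zero_iff]
      intro j hj
      exact sepForm_left _ _ (hv j) (hind i j (Finset.ne_of_mem_erase hj).symm)
    refine ⟨(eval (v i) (∏ j ∈ Finset.univ.erase i, sepForm (v i) (v j)))⁻¹ • ⟨_, (mem_homogeneousSubmodule _ _).2 hh⟩, ?_⟩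
    funext j
    rw [map_smul, Pi.smul_apply, hEval]
    by_cases hij : j = i
    · subst hij
      simp only [smul_eq_mul, Pi.basisFun_apply, Pi.single_eq_same]
      exact inv_mul_cancel₀ hne
    · have : eval (v j) (∏ j ∈ Finset.univ.erase i, sepForm (v i) (v j)) = 0 := by
        rw [map_prod]
        exact Finset.prod_eq_zero (Finset.mem_erase.2 ⟨hij, Finset.mem_univ j⟩) (sepForm_right _ _)
      simp only [this, smul_zero, Pi.basisFun_apply]
      rw [Pi.single_eq_of_ne hij]
  have hker : LinearMap.ker Ψ ≤ LinearMap.range Θ := by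
    rintro ⟨A, B⟩ hAB
    have h1 : (A : MvPolynomial (Fin 3) ℝ) * P + B * Q = 0 := by
      have := congrArg Subtype.val (LinearMap.mem_ker.1 hAB)
      simpa [Ψ, mulHom_coe] using this
    have h2 : Q ∣ (A : MvPolynomial (Fin 3) ℝ) * P := ⟨-B, by linear_combination h1⟩
    obtain ⟨D', hD'⟩ := hrel.symm.dvd_of_dvd_mul_right h2
    have hA := (mem_homogeneousSubmodule _ _).1 A.2
    have h3 : (A : MvPolynomial (Fin 3) ℝ) = Q * homogeneousComponent 5 D' := by
      rw [← homComp_mul_left Q D' 4 5 hQ, ← hD']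
      exact (homogeneousComponent_eq_self hA).symm
    refine ⟨⟨homogeneousComponent 5 D', (mem_homogeneousSubmodule _ _).2 (homogeneousComponent_isHomogeneous _ _)⟩, ?_⟩
    refine Prod.ext (Subtype.ext ?_) (Subtype.ext ?_)
    · simp [Θ, mulHom_coe, h3, mul_comm]
    · change -((homogeneousComponent 5 D' : MvPolynomial (Fin 3) ℝ) * P) = B
      apply mul_right_cancel₀ hQ0
      rw [h3] at h1
      linear_combination -h1
  have hrange : LinearMap.range Ψ ≤ LinearMap.ker E := by
    rintro _ ⟨⟨A, B⟩, rfl⟩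
    rw [LinearMap.mem_ker]
    funext i
    rw [hEval]
    simp [Ψ, mulHom_coe, hvP, hvQ]
  have d1 := LinearMap.finrank_range_add_finrank_ker Ψ
  have d2 := LinearMap.finrank_range_add_finrank_ker E
  rw [LinearMap.range_eq_top.2 hE, finrank_top, Module.finrank_fintype_fun_eq_card] at d2
  have d3 := LinearMap.finrank_range_le Θ
  have d4 := Submodule.finrank_mono hker
  have d5 := Submodule.finrank_mono hrange
  rw [Module.finrank_prod] at d1
  rw [finrank3] at d1 d2 d3
  rw [finrank3] at d1
  simp [Nat.choose] at d1 d2 d3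
  omega

lemma top_dvd (g P : MvPolynomial (Fin 3) ℝ) (n : ℕ) (hP : P.IsHomogeneous n) (h : g ∣ P) :
    homogeneousComponent g.totalDegree g ∣ P := by
  by_cases hP0 : P = 0
  · simp [hP0]
  obtain ⟨k, rfl⟩ := h
  have hg : g ≠ 0 := left_ne_zero_of_mul hP0
  have hk : k ≠ 0 := right_ne_zero_of_mul hP0
  have h1 : (g*k).totalDegree = n := hP.totalDegree hP0
  rw [totalDegree_mul_of_isDomain hg hk] at h1
  refine ⟨homogeneousComponent k.totalDegree k, ?_⟩
  rw [← homComp_mul_top _ _ _ _ le_rfl le_rfl, h1]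
  exact (homogeneousComponent_eq_self hP).symm

lemma hom_aeval_smul (g : MvPolynomial (Fin 3) ℝ) (n : ℕ) (hg : g.IsHomogeneous n) (s : ℂ) (v : Fin 3 → ℂ) :
    aeval (s • v) g = s ^ n * aeval v g := by
  rw [aeval_def, aeval_def, eval₂_eq, eval₂_eq, Finset.mul_sum]
  refine Finset.sum_congr rfl fun d hd => ?_
  have : d.degree = n := by
    by_contra hne
    exact (mem_support_iff.1 hd) (hg.coeff_eq_zero hne)
  simp only [Pi.smul_apply, smul_eq_mul, mul_pow, Finset.prod_mul_distrib, Finset.prod_pow_eq_pow_sum]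
  rw [← this, Finsupp.degree_apply]
  ring

lemma exists_conic_zero (g : MvPolynomial (Fin 3) ℝ) (n : ℕ) (hn : 0 < n) (hg : g.IsHomogeneous n) :
    ∃ v : Fin 3 → ℂ, v ≠ 0 ∧ v 0 ^ 2 + v 1 ^ 2 + v 2 ^ 2 = 0 ∧ aeval v g = 0 := by
  by_contra! hno
  have hI : Complex.I ^ 2 = -1 := Complex.I_sq
  let h : Polynomial ℂ := aeval (![1 - Polynomial.X^2, 2 * Polynomial.X, Polynomial.C Complex.I * (1 + Polynomial.X^2)] : Fin 3 → Polynomial ℂ) g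
  have hev : ∀ t : ℂ, h.eval t = aeval (![1 - t^2, 2*t, Complex.I * (1+t^2)] : Fin 3 → ℂ) g := by
    intro t
    have := MvPolynomial.comp_aeval_apply (R := ℝ) (![1 - Polynomial.X^2, 2 * Polynomial.X, Polynomial.C Complex.I * (1 + Polynomial.X^2)] : Fin 3 → Polynomial ℂ) ((Polynomial.aeval (R := ℂ) t).restrictScalars ℝ) g
    simp only [AlgHom.restrictScalars_apply, Polynomial.coe_aeval_eq_eval] at this
    rw [this]
    congr 2
    funext i
    fin_cases i <;> simp
  have hroot : ∀ t : ℂ, h.eval t ≠ 0 := by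
    intro t
    rw [hev]
    apply hno
    · intro h0
      have a0 := congrFun h0 0
      have a2 := congrFun h0 2
      simp at a0 a2
      have : (2:ℂ) = 0 := by linear_combination a0 + a2
      norm_num at this
    · simp
      linear_combination (1+t^2)^2 * hI
  have hdeg : h.degree = 0 := by
    by_contra hd
    obtain ⟨t, ht⟩ := IsAlgClosed.exists_root h hd
    exact hroot t ht
  rw [Polynomial.eq_C_of_degree_eq_zero hdeg] at hev hroot
  set c := h.coeff 0
  simp only [Polynomial.eval_C] at hev hroot
  have hc := hroot 0
  let k : Polynomial ℂ := aeval (![Polynomial.X^2 - 1, 2 * Polynomial.X, Polynomial.C Complex.I * (Polynomial.X^2 + 1)] : Fin 3 → Polynomial ℂ) g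
  have kev : ∀ t : ℂ, k.eval t = aeval (![t^2 - 1, 2*t, Complex.I * (t^2+1)] : Fin 3 → ℂ) g := by
    intro t
    have := MvPolynomial.comp_aeval_apply (R := ℝ) (![Polynomial.X^2 - 1, 2 * Polynomial.X, Polynomial.C Complex.I * (Polynomial.X^2 + 1)] : Fin 3 → Polynomial ℂ) ((Polynomial.aeval (R := ℂ) t).restrictScalars ℝ) g
    simp only [AlgHom.restrictScalars_apply, Polynomial.coe_aeval_eq_eval] at this
    rw [this]
    congr 2
    funext i
    fin_cases i <;> simp
  have kroot : ∀ t : ℂ, k.eval t ≠ 0 := by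
    intro t
    rw [kev]
    apply hno
    · intro h0
      have a0 := congrFun h0 0
      have a2 := congrFun h0 2
      simp at a0 a2
      have : (2:ℂ) = 0 := by linear_combination -a0 + a2
      norm_num at this
    · simp
      linear_combination (1+t^2)^2 * hI
  have kdeg : k.degree = 0 := by
    by_contra hd
    obtain ⟨t, ht⟩ := IsAlgClosed.exists_root k hd
    exact kroot t ht
  rw [Polynomial.eq_C_of_degree_eq_zero kdeg] at kev
  simp only [Polynomial.eval_C] at kev
  have e1 := kev 1
  have e2 := kev 2
  have f1 := hev 1
  have f2 := hev (1/2)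
  have g2 : (![2^2 - 1, 2*2, Complex.I * (2^2+1)] : Fin 3 → ℂ) = (4:ℂ) • ![1 - (1/2)^2, 2*(1/2), Complex.I * (1+(1/2)^2)] := by
    funext i
    fin_cases i <;> simp <;> ring
  have g1 : (![1^2 - 1, 2*1, Complex.I * (1^2+1)] : Fin 3 → ℂ) = ![1 - 1^2, 2*1, Complex.I * (1+1^2)] := by
    funext i
    fin_cases i <;> simp
  rw [g1, ← f1] at e1
  rw [g2, hom_aeval_smul g n hg, ← f2, e1] at e2
  have : (4:ℂ)^n = 1 := by
    have := mul_right_cancel₀ hc (show 1 * c = 4^n * c by rw [one_mul]; exact e2)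
    exact this.symm
  have h4 : ((4:ℕ):ℂ)^n = 1 := by exact_mod_cast this
  have h5 : (4:ℕ)^n = 1 := by exact_mod_cast h4
  have := Nat.one_lt_pow hn.ne' (show 1 < 4 by norm_num)
  omega

theorem relPrime_of_no_zero (P Q : MvPolynomial (Fin 3) ℝ) (n m : ℕ) (hP : P.IsHomogeneous n) (hQ : Q.IsHomogeneous m)
    (hno : ∀ v : Fin 3 → ℂ, v 0 ^ 2 + v 1 ^ 2 + v 2 ^ 2 = 0 → aeval v P = 0 → aeval v Q = 0 → v = 0) :
    IsRelPrime P Q := by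
  intro g hgP hgQ
  by_cases hg0 : g = 0
  · subst hg0
    exfalso
    rw [zero_dvd_iff] at hgP hgQ
    have := hno ![1, Complex.I, 0] (by simp) (by simp [hgP]) (by simp [hgQ])
    simpa using congrFun this 0
  by_cases hd : g.totalDegree = 0
  · rw [totalDegree_eq_zero_iff_eq_C] at hd
    rw [hd] at hg0 ⊢
    have hg1 : coeff 0 g ≠ 0 := fun h => hg0 (by rw [h, C_0])
    exact (isUnit_iff_ne_zero.2 hg1).map C
  · exfalso
    obtain ⟨v, hv0, hvN, hv⟩ := exists_conic_zero _ _ (Nat.pos_of_ne_zero hd)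
      (homogeneousComponent_isHomogeneous g.totalDegree g)
    apply hv0
    apply hno v hvN
    · obtain ⟨k, hk⟩ := top_dvd g P n hP hgP
      rw [hk, map_mul, hv, zero_mul]
    · obtain ⟨k, hk⟩ := top_dvd g Q m hQ hgQ
      rw [hk, map_mul, hv, zero_mul]

lemma isotropic_zero (A B : Matrix (Fin 3) (Fin 3) ℝ) (hAB : A * B = 1) (v w : Fin 3 → ℂ)
    (hN : v 0 ^ 2 + v 1 ^ 2 + v 2 ^ 2 = 0) (hwv : w 0 * v 0 + w 1 * v 1 + w 2 * v 2 = 0)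
    (hww : w 0 ^ 2 + w 1 ^ 2 + w 2 ^ 2 = 0)
    (hw : ∀ l, w l = ∑ i, (B l i : ℂ) * (-(∑ j, (A i j : ℂ) * v j) ^ 2)) : v = 0 := by
  by_contra hv
  have hBA : B * A = 1 := mul_eq_one_comm.1 hAB
  have n0 : w 1 * v 2 - w 2 * v 1 = 0 := by
    apply pow_eq_zero_iff (two_ne_zero) |>.1
    linear_combination (w 1 ^2 + w 2^2) * hN - (v 0)^2 * hww - (w 1 * v 1 + w 2 * v 2 - w 0 * v 0) * hwv
  have n1 : w 0 * v 2 - w 2 * v 0 = 0 := by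
    apply pow_eq_zero_iff (two_ne_zero) |>.1
    linear_combination (w 0 ^2 + w 2^2) * hN - (v 1)^2 * hww - (w 0 * v 0 + w 2 * v 2 - w 1 * v 1) * hwv
  have n2 : w 0 * v 1 - w 1 * v 0 = 0 := by
    apply pow_eq_zero_iff (two_ne_zero) |>.1
    linear_combination (w 0 ^2 + w 1^2) * hN - (v 2)^2 * hww - (w 0 * v 0 + w 1 * v 1 - w 2 * v 2) * hwv
  obtain ⟨lam, hlam⟩ : ∃ lam : ℂ, ∀ l, w l = lam * v l := by
    obtain ⟨i, hi⟩ : ∃ i, v i ≠ 0 := by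
      by_contra! hc; exact hv (funext hc)
    refine ⟨w i / v i, fun j => ?_⟩
    field_simp
    fin_cases i <;> fin_cases j <;> simp <;> first | linear_combination n0 | linear_combination n1 | linear_combination n2 | linear_combination -n0 | linear_combination -n1 | linear_combination -n2
  let AC : Matrix (Fin 3) (Fin 3) ℂ := A.map Complex.ofRealHom
  let BC : Matrix (Fin 3) (Fin 3) ℂ := B.map Complex.ofRealHom
  have hABC : AC * BC = 1 := by
    simp only [AC, BC]
    rw [← Matrix.map_mul, hAB, Matrix.map_one _ (map_zero _) (map_one _)]
  have hBAC : BC * AC = 1 := mul_eq_one_comm.1 hABC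
  let x : Fin 3 → ℂ := AC.mulVec v
  have hxv : BC.mulVec x = v := by
    simp only [x, Matrix.mulVec_mulVec, hBAC, Matrix.one_mulVec]
  have hwx : w = BC.mulVec (fun i => -(x i)^2) := by
    funext l
    rw [hw l]
    rfl
  have hx : ∀ i, -(x i)^2 = lam * x i := by
    intro i
    have h1 : AC.mulVec w = fun i => -(x i)^2 := by
      rw [hwx, Matrix.mulVec_mulVec, hABC, Matrix.one_mulVec]
    have h2 : AC.mulVec w = lam • x := by
      have : w = lam • v := funext hlam
      rw [this, Matrix.mulVec_smul]
    have := congrFun (h1.symm.trans h2) i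
    simpa using this
  have hlam0 : lam ≠ 0 := by
    rintro rfl
    have : x = 0 := by
      funext i
      have := hx i
      simpa using this
    rw [this, Matrix.mulVec_zero] at hxv
    exact hv hxv.symm
  have hε : ∀ i, ∃ e : ℝ, x i = -lam * e := by
    intro i
    have : x i * (x i + lam) = 0 := by linear_combination -hx i
    rcases mul_eq_zero.1 this with h | h
    · exact ⟨0, by simp [h]⟩
    · exact ⟨1, by push_cast; linear_combination h⟩
  choose e he using hε
  let y : Fin 3 → ℝ := B.mulVec e
  have hvy : ∀ l, v l = -lam * y l := by
    intro l
    rw [← hxv]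
    simp only [y, Matrix.mulVec, dotProduct, BC, Matrix.map_apply, Complex.ofRealHom_eq_coe, he, Fin.sum_univ_three]
    push_cast
    ring
  have hy : (y 0)^2 + (y 1)^2 + (y 2)^2 = 0 := by
    have h1 : lam^2 * (((y 0)^2 + (y 1)^2 + (y 2)^2 : ℝ) : ℂ) = 0 := by
      push_cast
      rw [hvy 0, hvy 1, hvy 2] at hN
      linear_combination hN
    have h2 := (mul_eq_zero.1 h1).resolve_left (pow_ne_zero 2 hlam0)
    exact_mod_cast h2
  apply hv
  funext l
  rw [hvy l]
  have : y l = 0 := by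
    have h0 := sq_nonneg (y 0)
    have h1 := sq_nonneg (y 1)
    have h2 := sq_nonneg (y 2)
    have : (y l)^2 = 0 := by
      fin_cases l <;> simp <;> nlinarith
    exact pow_eq_zero_iff two_ne_zero |>.1 this
  simp [this]

/-- dot product -/
def dt3 (x y : Fin 3 → ℝ) : ℝ := x 0 * y 0 + x 1 * y 1 + x 2 * y 2

def TP3 (d : Fin 3 → Fin 3 → ℝ) (K : Fin 3 → ℝ) (r : ℝ) (p v : Fin 3 → ℝ) : Prop :=
  v ≠ 0 ∧ dt3 p v = 0 ∧ dt3 p p = r ^ 2 ∧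
    ∀ i, 2 * dt3 p (d i) * dt3 v v = K i * dt3 v v - (dt3 (d i) v) ^ 2

def lineP3 (c : Pt3) (p v : Fin 3 → ℝ) : Set Pt3 := lineThrough3 (c + WithLp.toLp 2 p) (WithLp.toLp 2 v)

lemma dt3_pos (v : Fin 3 → ℝ) (hv : v ≠ 0) : 0 < dt3 v v := by
  obtain ⟨i, hi⟩ : ∃ i, v i ≠ 0 := by
    by_contra! hc; exact hv (funext hc)
  have h := mul_self_pos.2 hi
  have h0 := mul_self_nonneg (v 0)
  have h1 := mul_self_nonneg (v 1)
  have h2 := mul_self_nonneg (v 2)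
  have key : v i * v i ≤ v 0 * v 0 + v 1 * v 1 + v 2 * v 2 := by
    fin_cases i <;> simp <;> nlinarith
  unfold dt3
  linarith

lemma lineP3_smul (c : Pt3) (p v : Fin 3 → ℝ) (s : ℝ) (hs : s ≠ 0) : lineP3 c p (s • v) = lineP3 c p v := by
  ext x
  simp only [lineP3, lineThrough3, Set.mem_ofPred_eq]
  constructor
  · rintro ⟨t, rfl⟩
    exact ⟨t * s, by rw [WithLp.toLp_smul, smul_smul]⟩
  · rintro ⟨t, rfl⟩
    exact ⟨t / s, by rw [WithLp.toLp_smul, smul_smul, div_mul_cancel₀ _ hs]⟩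

def tN : MvPolynomial (Fin 3) ℝ := X 0 ^ 2 + X 1 ^ 2 + X 2 ^ 2
def tL (A : Matrix (Fin 3) (Fin 3) ℝ) (i : Fin 3) : MvPolynomial (Fin 3) ℝ := ∑ j, C (A i j) * X j
def tPhi (A : Matrix (Fin 3) (Fin 3) ℝ) (K : Fin 3 → ℝ) (i : Fin 3) : MvPolynomial (Fin 3) ℝ :=
  C (K i) * tN - tL A i ^ 2
def tW (A B : Matrix (Fin 3) (Fin 3) ℝ) (K : Fin 3 → ℝ) (l : Fin 3) : MvPolynomial (Fin 3) ℝ :=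
  ∑ i, C (B l i) * tPhi A K i
def tCub (A B : Matrix (Fin 3) (Fin 3) ℝ) (K : Fin 3 → ℝ) : MvPolynomial (Fin 3) ℝ :=
  ∑ l, tW A B K l * X l
def tQua (A B : Matrix (Fin 3) (Fin 3) ℝ) (K : Fin 3 → ℝ) (r : ℝ) : MvPolynomial (Fin 3) ℝ :=
  ∑ l, tW A B K l ^ 2 - C (4 * r ^ 2) * tN ^ 2

lemma tN_hom : tN.IsHomogeneous 2 :=
  ((isHomogeneous_X_pow _ _).add (isHomogeneous_X_pow _ _)).add (isHomogeneous_X_pow _ _)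
lemma tL_hom (A i) : (tL A i).IsHomogeneous 1 :=
  IsHomogeneous.sum _ _ _ fun _ _ => isHomogeneous_C_mul_X _ _
lemma tPhi_hom (A K i) : (tPhi A K i).IsHomogeneous 2 :=
  (tN_hom.C_mul _).sub ((tL_hom A i).pow 2)
lemma tW_hom (A B K l) : (tW A B K l).IsHomogeneous 2 :=
  IsHomogeneous.sum _ _ _ fun _ _ => (tPhi_hom _ _ _).C_mul _
lemma tCub_hom (A B K) : (tCub A B K).IsHomogeneous 3 :=
  IsHomogeneous.sum _ _ _ fun l _ => (tW_hom A B K l).mul (isHomogeneous_X _ _)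
lemma tQua_hom (A B K r) : (tQua A B K r).IsHomogeneous 4 :=
  (IsHomogeneous.sum _ _ _ fun l _ => (tW_hom A B K l).pow 2).sub ((tN_hom.pow 2).C_mul _)

lemma t_relPrime (A B : Matrix (Fin 3) (Fin 3) ℝ) (hAB : A * B = 1) (K : Fin 3 → ℝ) (r : ℝ) :
    IsRelPrime (tCub A B K) (tQua A B K r) := by
  apply relPrime_of_no_zero _ _ 3 4 (tCub_hom _ _ _) (tQua_hom _ _ _ _)
  intro v hN hC hQ
  have hn : aeval v tN = 0 := by
    simpa [tN] using hN
  apply isotropic_zero A B hAB v (fun l => aeval v (tW A B K l)) hN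
  · simpa [tCub, Fin.sum_univ_three] using hC
  · simpa [tQua, Fin.sum_univ_three, hn] using hQ
  · intro l
    simp [tW, tPhi, tL, hn]

lemma tW_eval (A B : Matrix (Fin 3) (Fin 3) ℝ) (hBA : B * A = 1) (K : Fin 3 → ℝ) (r : ℝ)
    (p v : Fin 3 → ℝ) (h : TP3 A K r p v) (l : Fin 3) :
    eval v (tW A B K l) = 2 * dt3 v v * p l := by
  obtain ⟨-, -, -, h4⟩ := h
  have hn : eval v tN = dt3 v v := by simp [tN, dt3]; ring
  have h1 : ∀ i, eval v (tPhi A K i) = 2 * dt3 v v * (A.mulVec p) i := by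
    intro i
    have h5 := h4 i
    have e1 : eval v (tL A i) = dt3 (A i) v := by simp [tL, dt3, Fin.sum_univ_three]
    have e2 : A.mulVec p i = dt3 p (A i) := by
      simp only [Matrix.mulVec, dotProduct, dt3, Fin.sum_univ_three]; ring
    simp only [tPhi, map_sub, map_mul, map_pow, eval_C, hn, e1, e2]
    linear_combination -h5
  have h2 : B.mulVec (A.mulVec p) = p := by
    rw [Matrix.mulVec_mulVec, hBA, Matrix.one_mulVec]
  have h3 : p l = ∑ i, B l i * A.mulVec p i := by
    conv_lhs => rw [← h2]
    rfl
  rw [h3, Finset.mul_sum]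
  simp only [tW, map_sum, map_mul, eval_C, h1]
  exact Finset.sum_congr rfl fun i _ => by ring

theorem tetra_case (d : Fin 3 → Fin 3 → ℝ) (K : Fin 3 → ℝ) (r : ℝ) (c : Pt3)
    (hdet : (Matrix.of d).det ≠ 0) :
    {l | ∃ p v, TP3 d K r p v ∧ l = lineP3 c p v}.encard ≤ 12 := by
  by_contra hlt
  rw [not_le] at hlt
  have h13 : (13 : ℕ∞) ≤ {l | ∃ p v, TP3 d K r p v ∧ l = lineP3 c p v}.encard := by
    have := Order.add_one_le_of_lt hlt
    exact this
  obtain ⟨t, hts, ht⟩ := Set.exists_subset_encard_eq h13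
  have hfin : t.Finite := Set.finite_of_encard_eq_coe (k := 13) (by simpa using ht)
  have hcard : hfin.toFinset.card = 13 := by
    have := hfin.encard_eq_coe_toFinset_card
    rw [ht] at this
    exact_mod_cast this.symm
  let e := hfin.toFinset.equivFinOfCardEq hcard
  let A : Matrix (Fin 3) (Fin 3) ℝ := Matrix.of d
  let B := A⁻¹
  have hAB : A * B = 1 := Matrix.mul_nonsing_inv A (isUnit_iff_ne_zero.2 hdet)
  have hBA : B * A = 1 := Matrix.nonsing_inv_mul A (isUnit_iff_ne_zero.2 hdet)
  have hmem : ∀ i, ∃ p v, TP3 d K r p v ∧ ((e.symm i).1 : Set Pt3) = lineP3 c p v := by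
    intro i
    exact hts (hfin.mem_toFinset.1 (e.symm i).2)
  choose p v hTP hl using hmem
  have hW := fun i l => tW_eval A B hBA K r (p i) (v i) (hTP i) l
  have hn : ∀ i, eval (v i) tN = dt3 (v i) (v i) := by intro i; simp [tN, dt3]; ring
  refine bezout34 (tCub A B K) (tQua A B K r) (tCub_hom _ _ _) (tQua_hom _ _ _ _)
    (t_relPrime A B hAB K r) v (fun i => (hTP i).1) ?_ ?_ ?_
  · intro i j hij s hs
    have hs0 : s ≠ 0 := by
      rintro rfl
      exact (hTP i).1 (by simpa using hs)
    have hNj := dt3_pos _ (hTP j).1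
    have hp : p i = p j := by
      funext l
      have h1 := hW i l
      have h2 := hW j l
      have h3 : eval (v i) (tW A B K l) = s ^ 2 * eval (v j) (tW A B K l) := by
        rw [hs]
        simp [tW, tPhi, tL, tN, Fin.sum_univ_three]
        ring
      have h4 : dt3 (v i) (v i) = s ^ 2 * dt3 (v j) (v j) := by
        rw [hs]; simp [dt3]; ring
      rw [h3, h2, h4] at h1
      have h5 : (2 * s^2 * dt3 (v j) (v j)) ≠ 0 := by positivity
      apply mul_left_cancel₀ h5
      linear_combination -h1
    apply hij
    apply e.symm.injective
    apply Subtype.ext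
    rw [hl i, hl j, hp, hs, lineP3_smul _ _ _ _ hs0]
  · intro i
    have h1 := (hTP i).2.1
    simp only [tCub, map_add, map_mul, hW, eval_X, Fin.sum_univ_three]
    unfold dt3 at h1 ⊢
    linear_combination (2 * (v i 0 * v i 0 + v i 1 * v i 1 + v i 2 * v i 2)) * h1
  · intro i
    have h1 := (hTP i).2.2.1
    simp only [tQua, map_add, map_mul, map_sub, map_pow, hW, hn, eval_C, Fin.sum_univ_three]
    unfold dt3 at h1 ⊢
    linear_combination (4 * (v i 0 * v i 0 + v i 1 * v i 1 + v i 2 * v i 2)^2) * h1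

end

/-- the eliminated form -/
def F4 {k : Type*} [CommRing k] (H11 H12 H22 K1 K2 R x y t : k) : k :=
  -(H11*H22-H12^2) * (t*(K1*y-K2*x) - x*y*(x-y))^2
   + (H11*(K1*t-x^2)^2 + 2*H12*(K1*t-x^2)*(K2*t-y^2) + H22*(K2*t-y^2)^2)*t
   - 4*R*t^2*(t-(H11*x^2+2*H12*x*y+H22*y^2))

lemma F4_coef (H11 H12 H22 K1 K2 R α β γ : ℝ) : ∃ f0 f1 f2 f3 f4 f5 f6 : ℝ, ∀ x y,
    F4 H11 H12 H22 K1 K2 R x y (α*x^2+2*β*x*y+γ*y^2) =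
      f0*y^6 + f1*x*y^5 + f2*x^2*y^4 + f3*x^3*y^3+f4*x^4*y^2+f5*x^5*y+f6*x^6 := by
  refine ⟨
-(H11*H22-H12^2)*((K1*γ)*(K1*γ)) + ((H11*((K1*γ)*(K1*γ))+2*H12*((K1*γ)*(K2*γ-1))+H22*((K2*γ-1)*(K2*γ-1)))*γ) - 4*R*((γ*γ)*(γ-H22)),
-(H11*H22-H12^2)*((K1*γ)*((2*K1*β)-(K2*γ-1)) + ((2*K1*β)-(K2*γ-1))*(K1*γ)) + ((H11*((K1*γ)*(K1*γ))+2*H12*((K1*γ)*(K2*γ-1))+H22*((K2*γ-1)*(K2*γ-1)))*(2*β) + (H11*((K1*γ)*(2*K1*β) + (2*K1*β)*(K1*γ))+2*H12*((K1*γ)*(2*K2*β) + (2*K1*β)*(K2*γ-1))+H22*((K2*γ-1)*(2*K2*β) + (2*K2*β)*(K2*γ-1)))*γ) - 4*R*((γ*γ)*((2*β)-(2*H12)) + (γ*(2*β) + (2*β)*γ)*(γ-H22)),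
-(H11*H22-H12^2)*((K1*γ)*((K1*α-1)-(2*K2*β)) + ((2*K1*β)-(K2*γ-1))*((2*K1*β)-(K2*γ-1)) + ((K1*α-1)-(2*K2*β))*(K1*γ)) + ((H11*((K1*γ)*(K1*γ))+2*H12*((K1*γ)*(K2*γ-1))+H22*((K2*γ-1)*(K2*γ-1)))*α + (H11*((K1*γ)*(2*K1*β) + (2*K1*β)*(K1*γ))+2*H12*((K1*γ)*(2*K2*β) + (2*K1*β)*(K2*γ-1))+H22*((K2*γ-1)*(2*K2*β) + (2*K2*β)*(K2*γ-1)))*(2*β) + (H11*((K1*γ)*(K1*α-1) + (2*K1*β)*(2*K1*β) + (K1*α-1)*(K1*γ))+2*H12*((K1*γ)*(K2*α) + (2*K1*β)*(2*K2*β) + (K1*α-1)*(K2*γ-1))+H22*((K2*γ-1)*(K2*α) + (2*K2*β)*(2*K2*β) + (K2*α)*(K2*γ-1)))*γ) - 4*R*((γ*γ)*(α-H11) + (γ*(2*β) + (2*β)*γ)*((2*β)-(2*H12)) + (γ*α + (2*β)*(2*β) + α*γ)*(γ-H22)),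
-(H11*H22-H12^2)*((K1*γ)*(-(K2*α)) + ((2*K1*β)-(K2*γ-1))*((K1*α-1)-(2*K2*β)) + ((K1*α-1)-(2*K2*β))*((2*K1*β)-(K2*γ-1)) + (-(K2*α))*(K1*γ)) + ((H11*((K1*γ)*(2*K1*β) + (2*K1*β)*(K1*γ))+2*H12*((K1*γ)*(2*K2*β) + (2*K1*β)*(K2*γ-1))+H22*((K2*γ-1)*(2*K2*β) + (2*K2*β)*(K2*γ-1)))*α + (H11*((K1*γ)*(K1*α-1) + (2*K1*β)*(2*K1*β) + (K1*α-1)*(K1*γ))+2*H12*((K1*γ)*(K2*α) + (2*K1*β)*(2*K2*β) + (K1*α-1)*(K2*γ-1))+H22*((K2*γ-1)*(K2*α) + (2*K2*β)*(2*K2*β) + (K2*α)*(K2*γ-1)))*(2*β) + (H11*((2*K1*β)*(K1*α-1) + (K1*α-1)*(2*K1*β))+2*H12*((2*K1*β)*(K2*α) + (K1*α-1)*(2*K2*β))+H22*((2*K2*β)*(K2*α) + (K2*α)*(2*K2*β)))*γ) - 4*R*((γ*(2*β) + (2*β)*γ)*(α-H11) + (γ*α + (2*β)*(2*β) + α*γ)*((2*β)-(2*H12))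 + ((2*β)*α + α*(2*β))*(γ-H22)),
-(H11*H22-H12^2)*(((2*K1*β)-(K2*γ-1))*(-(K2*α)) + ((K1*α-1)-(2*K2*β))*((K1*α-1)-(2*K2*β)) + (-(K2*α))*((2*K1*β)-(K2*γ-1))) + ((H11*((K1*γ)*(K1*α-1) + (2*K1*β)*(2*K1*β) + (K1*α-1)*(K1*γ))+2*H12*((K1*γ)*(K2*α) + (2*K1*β)*(2*K2*β) + (K1*α-1)*(K2*γ-1))+H22*((K2*γ-1)*(K2*α) + (2*K2*β)*(2*K2*β) + (K2*α)*(K2*γ-1)))*α + (H11*((2*K1*β)*(K1*α-1) + (K1*α-1)*(2*K1*β))+2*H12*((2*K1*β)*(K2*α) + (K1*α-1)*(2*K2*β))+H22*((2*K2*β)*(K2*α) + (K2*α)*(2*K2*β)))*(2*β) + (H11*((K1*α-1)*(K1*α-1))+2*H12*((K1*α-1)*(K2*α))+H22*((K2*α)*(K2*α)))*γ) - 4*R*((γ*α + (2*β)*(2*β) + α*γ)*(α-H11) + ((2*β)*α + α*(2*β))*((2*β)-(2*H12)) + (α*α)*(γ-H22)),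
-(H11*H22-H12^2)*(((K1*α-1)-(2*K2*β))*(-(K2*α)) + (-(K2*α))*((K1*α-1)-(2*K2*β))) + ((H11*((2*K1*β)*(K1*α-1) + (K1*α-1)*(2*K1*β))+2*H12*((2*K1*β)*(K2*α) + (K1*α-1)*(2*K2*β))+H22*((2*K2*β)*(K2*α) + (K2*α)*(2*K2*β)))*α + (H11*((K1*α-1)*(K1*α-1))+2*H12*((K1*α-1)*(K2*α))+H22*((K2*α)*(K2*α)))*(2*β)) - 4*R*(((2*β)*α + α*(2*β))*(α-H11) + (α*α)*((2*β)-(2*H12))),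
-(H11*H22-H12^2)*((-(K2*α))*(-(K2*α))) + ((H11*((K1*α-1)*(K1*α-1))+2*H12*((K1*α-1)*(K2*α))+H22*((K2*α)*(K2*α)))*α) - 4*R*((α*α)*(α-H11)),
   ?_⟩
  intro x y
  unfold F4
  ring

lemma coefs7 (c0 c1 c2 c3 c4 c5 c6 : ℝ)
    (h : ∀ x : ℝ, c0 + c1*x+c2*x^2+c3*x^3+c4*x^4+c5*x^5+c6*x^6 = 0) :
    c0 = 0 ∧ c1 = 0 ∧ c2 = 0 ∧ c3 = 0 ∧ c4 = 0 ∧ c5 = 0 ∧ c6 = 0 := by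
  have h0 := h 0
  have h1 := h 1
  have h2 := h (-1)
  have h3 := h 2
  have h4 := h (-2)
  have h5 := h 3
  have h6 := h (-3)
  norm_num at h0 h1 h2 h3 h4 h5 h6
  refine ⟨?_, ?_, ?_, ?_, ?_, ?_, ?_⟩ <;> linarith

set_option maxHeartbeats 1000000 in
lemma F4_nz_alpha (H11 H12 H22 K1 K2 R β γ : ℝ) (h1 : 0 < H11) (hδ : 0 < H11*H22-H12^2) (hR : 0 < R)
    (hne : ¬ (β = 0 ∧ γ = 0))
    (h : ∀ x y : ℝ, F4 H11 H12 H22 K1 K2 R x y (2*β*x*y+γ*y^2) = 0) : False := by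
  have hc := coefs7
    (-(H11*H22-H12^2)*0 + 0 - 4*R*0)
    (-(H11*H22-H12^2)*0 + ((H11*((-1)*(-1))+2*H12*0+H22*0)*(2*β)) - 4*R*0)
    (-(H11*H22-H12^2)*((-1-2*K2*β)*(-1-2*K2*β)) + ((H11*((-1)*(-1))+2*H12*0+H22*0)*γ + (H11*((-1)*(2*K1*β) + (2*K1*β)*(-1))+2*H12*((-1)*(2*K2*β))+H22*0)*(2*β)) - 4*R*(((2*β)*(2*β))*(-H11)))
    (-(H11*H22-H12^2)*((-1-2*K2*β)*(2*K1*β-(K2*γ-1)) + (2*K1*β-(K2*γ-1))*(-1-2*K2*β)) + ((H11*((-1)*(2*K1*β) + (2*K1*β)*(-1))+2*H12*((-1)*(2*K2*β))+H22*0)*γ + (H11*((-1)*(K1*γ) + (2*K1*β)*(2*K1*β) + (K1*γ)*(-1))+2*H12*((-1)*(K2*γ-1) + (2*K1*β)*(2*K2*β))+H22*((2*K2*β)*(2*K2*β)))*(2*β)) - 4*R*(((2*β)*(2*β))*((2*β)-(2*H12)) + ((2*β)*γ + γ*(2*β))*(-H11)))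
    (-(H11*H22-H12^2)*((-1-2*K2*β)*(K1*γ) + (2*K1*β-(K2*γ-1))*(2*K1*β-(K2*γ-1)) + (K1*γ)*(-1-2*K2*β)) + ((H11*((-1)*(K1*γ) + (2*K1*β)*(2*K1*β) + (K1*γ)*(-1))+2*H12*((-1)*(K2*γ-1) + (2*K1*β)*(2*K2*β))+H22*((2*K2*β)*(2*K2*β)))*γ + (H11*((2*K1*β)*(K1*γ) + (K1*γ)*(2*K1*β))+2*H12*((2*K1*β)*(K2*γ-1) + (K1*γ)*(2*K2*β))+H22*((2*K2*β)*(K2*γ-1) + (K2*γ-1)*(2*K2*β)))*(2*β)) - 4*R*(((2*β)*(2*β))*(γ-H22) + ((2*β)*γ + γ*(2*β))*((2*β)-(2*H12)) + (γ*γ)*(-H11)))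
    (-(H11*H22-H12^2)*((2*K1*β-(K2*γ-1))*(K1*γ) + (K1*γ)*(2*K1*β-(K2*γ-1))) + ((H11*((2*K1*β)*(K1*γ) + (K1*γ)*(2*K1*β))+2*H12*((2*K1*β)*(K2*γ-1) + (K1*γ)*(2*K2*β))+H22*((2*K2*β)*(K2*γ-1) + (K2*γ-1)*(2*K2*β)))*γ + (H11*((K1*γ)*(K1*γ))+2*H12*((K1*γ)*(K2*γ-1))+H22*((K2*γ-1)*(K2*γ-1)))*(2*β)) - 4*R*(((2*β)*γ + γ*(2*β))*(γ-H22) + (γ*γ)*((2*β)-(2*H12))))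
    (-(H11*H22-H12^2)*((K1*γ)*(K1*γ)) + ((H11*((K1*γ)*(K1*γ))+2*H12*((K1*γ)*(K2*γ-1))+H22*((K2*γ-1)*(K2*γ-1)))*γ) - 4*R*((γ*γ)*(γ-H22)))
    (by
      intro y
      have hh := h 1 y
      unfold F4 at hh
      linear_combination hh)
  have hb : β = 0 := by
    have e : H11 * β = 0 := by linear_combination hc.2.1 / 2
    exact (mul_eq_zero.1 e).resolve_left h1.ne'
  have hg : γ ≠ 0 := fun hg => hne ⟨hb, hg⟩
  subst hb
  have e2 : -(H11*H22-H12^2) + H11 * γ = 0 := by linear_combination hc.2.2.1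
  have e3 : (H11*H22-H12^2) * (K2*γ-1) = 0 := by linear_combination (-1/2) * hc.2.2.2.1
  have em : K2*γ-1 = 0 := (mul_eq_zero.1 e3).resolve_left hδ.ne'
  have e4 : 4*R*γ^2*H11 = 0 := by
    have := hc.2.2.2.2.1
    rw [em] at this
    linear_combination this + 2*K1*γ*e2
  have : 4*R*γ^2*H11 ≠ 0 := by positivity
  exact this e4

set_option maxHeartbeats 1000000 in
lemma F4_nz_one (H11 H12 H22 K1 K2 R α β γ : ℝ) (h1 : 0 < H11) (hδ : 0 < H11*H22-H12^2)
    (h0 : α + 2*β + γ = 0)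
    (h : ∀ x y : ℝ, F4 H11 H12 H22 K1 K2 R x y (α*x^2+2*β*x*y+γ*y^2) = 0) : β + γ = 0 := by
  obtain ⟨s, hs⟩ : ∃ s, s = 2*β+2*γ := ⟨_, rfl⟩
  have ha : α = -2*β-γ := by linarith
  have hb : β = s/2 - γ := by linarith
  have hc := coefs7
    (-(H11*H22-H12^2)*0 + 0 - 4*R*0)
    (-(H11*H22-H12^2)*0 + ((H11*((-1)*(-1))+2*H12*((-1)*(-1))+H22*((-1)*(-1)))*s) - 4*R*0)
    (-(H11*H22-H12^2)*((K1*s-1-K2*s+2)*(K1*s-1-K2*s+2)) + ((H11*((-1)*(-1))+2*H12*((-1)*(-1))+H22*((-1)*(-1)))*γ + (H11*((-1)*(K1*s) + (K1*s)*(-1))+2*H12*((-1)*(K2*s-2) + (K1*s)*(-1))+H22*((-1)*(K2*s-2) + (K2*s-2)*(-1)))*s) - 4*R*((s*s)*(-(H11+2*H12+H22))))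
    (-(H11*H22-H12^2)*((K1*s-1-K2*s+2)*(K1*γ+K1*s-K2*γ+1) + (K1*γ+K1*s-K2*γ+1)*(K1*s-1-K2*s+2)) + ((H11*((-1)*(K1*s) + (K1*s)*(-1))+2*H12*((-1)*(K2*s-2) + (K1*s)*(-1))+H22*((-1)*(K2*s-2) + (K2*s-2)*(-1)))*γ + (H11*((-1)*(K1*γ) + (K1*s)*(K1*s) + (K1*γ)*(-1))+2*H12*((-1)*(K2*γ-1) + (K1*s)*(K2*s-2) + (K1*γ)*(-1))+H22*((-1)*(K2*γ-1) + (K2*s-2)*(K2*s-2) + (K2*γ-1)*(-1)))*s) - 4*R*((s*s)*(s-(2*H12+2*H22)) + (s*γ + γ*s)*(-(H11+2*H12+H22))))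
    (-(H11*H22-H12^2)*((K1*s-1-K2*s+2)*(K1*γ) + (K1*γ+K1*s-K2*γ+1)*(K1*γ+K1*s-K2*γ+1) + (K1*γ)*(K1*s-1-K2*s+2)) + ((H11*((-1)*(K1*γ) + (K1*s)*(K1*s) + (K1*γ)*(-1))+2*H12*((-1)*(K2*γ-1) + (K1*s)*(K2*s-2) + (K1*γ)*(-1))+H22*((-1)*(K2*γ-1) + (K2*s-2)*(K2*s-2) + (K2*γ-1)*(-1)))*γ + (H11*((K1*s)*(K1*γ) + (K1*γ)*(K1*s))+2*H12*((K1*s)*(K2*γ-1) + (K1*γ)*(K2*s-2))+H22*((K2*s-2)*(K2*γ-1) + (K2*γ-1)*(K2*s-2)))*s) - 4*R*((s*s)*(γ-H22) + (s*γ + γ*s)*(s-(2*H12+2*H22)) + (γ*γ)*(-(H11+2*H12+H22))))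
    (-(H11*H22-H12^2)*((K1*γ+K1*s-K2*γ+1)*(K1*γ) + (K1*γ)*(K1*γ+K1*s-K2*γ+1)) + ((H11*((K1*s)*(K1*γ) + (K1*γ)*(K1*s))+2*H12*((K1*s)*(K2*γ-1) + (K1*γ)*(K2*s-2))+H22*((K2*s-2)*(K2*γ-1) + (K2*γ-1)*(K2*s-2)))*γ + (H11*((K1*γ)*(K1*γ))+2*H12*((K1*γ)*(K2*γ-1))+H22*((K2*γ-1)*(K2*γ-1)))*s) - 4*R*((s*γ + γ*s)*(γ-H22) + (γ*γ)*(s-(2*H12+2*H22))))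
    (-(H11*H22-H12^2)*((K1*γ)*(K1*γ)) + ((H11*((K1*γ)*(K1*γ))+2*H12*((K1*γ)*(K2*γ-1))+H22*((K2*γ-1)*(K2*γ-1)))*γ) - 4*R*((γ*γ)*(γ-H22)))
    (by
      intro t
      have hh := h 1 (1+t)
      rw [ha, hb] at hh
      unfold F4 at hh
      linear_combination hh)
  have e : (H11+2*H12+H22) * s = 0 := by linear_combination hc.2.1
  have hp : H11+2*H12+H22 ≠ 0 := by
    intro h2
    have : H11 * (H11+2*H12+H22) = (H11+H12)^2 + (H11*H22-H12^2) := by ring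
    rw [h2] at this
    nlinarith [sq_nonneg (H11+H12)]
  have := (mul_eq_zero.1 e).resolve_left hp
  linarith

lemma F4_map_complex (H11 H12 H22 K1 K2 R α β γ : ℝ)
    (h : ∀ x : ℝ, F4 H11 H12 H22 K1 K2 R x 1 (α*x^2+2*β*x+γ) = 0) (x : ℂ) :
    F4 (H11:ℂ) H12 H22 K1 K2 R x 1 (α*x^2+2*β*x+γ) = 0 := by
  let P : Polynomial ℝ := F4 (Polynomial.C H11) (Polynomial.C H12) (Polynomial.C H22) (Polynomial.C K1)
    (Polynomial.C K2) (Polynomial.C R) Polynomial.X 1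
    (Polynomial.C α*Polynomial.X^2+2*Polynomial.C β*Polynomial.X+Polynomial.C γ)
  have hP : P = 0 := by
    apply Polynomial.funext
    intro x
    rw [Polynomial.eval_zero, ← h x]
    simp [P, F4]
  have := congrArg (Polynomial.aeval x) hP
  rw [map_zero] at this
  rw [← this]
  simp [P, F4, map_ofNat]

lemma F4_nz (H11 H12 H22 K1 K2 R a b k : ℝ) (h1 : 0 < H11) (hδ : 0 < H11*H22-H12^2) (hR : 0 < R)
    (hk : k ≠ 0) (hab : a + b ≠ 1) (h00 : ¬ (a = 0 ∧ b = 0)) 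
    (h10 : ¬ (a = 1 ∧ b = 0)) (h01 : ¬ (a = 0 ∧ b = 1))
    (h : ∀ x y : ℝ, F4 H11 H12 H22 K1 K2 R x y ((a^2-a)/k*x^2+2*(a*b/k)*x*y+(b^2-b)/k*y^2) = 0) : False := by
  have h2 : 0 < H22 := by
    by_contra hn
    nlinarith [sq_nonneg H12]
  obtain ⟨α, hα⟩ : ∃ α, α = (a^2-a)/k := ⟨_, rfl⟩
  obtain ⟨β, hβ⟩ : ∃ β, β = a*b/k := ⟨_, rfl⟩
  obtain ⟨γ, hγ⟩ : ∃ γ, γ = (b^2-b)/k := ⟨_, rfl⟩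
  rw [← hα, ← hβ, ← hγ] at h
  rw [eq_div_iff hk] at hα hβ hγ
  have nz : ¬ (α = 0 ∧ β = 0 ∧ γ = 0) := by
    rintro ⟨rfl, rfl, rfl⟩
    have ha : a * (a - 1) = 0 := by linear_combination -hα
    have hb : b * (b - 1) = 0 := by linear_combination -hγ
    have hab' : a * b = 0 := by linear_combination -hβ
    rcases mul_eq_zero.1 ha with ha | ha <;> rcases mul_eq_zero.1 hb with hb | hb
    · exact h00 ⟨ha, hb⟩
    · exact h01 ⟨ha, by linarith⟩
    · exact h10 ⟨by linarith, hb⟩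
    · have : a = 1 := by linarith
      have : b = 1 := by linarith
      subst_vars
      norm_num at hab'
  by_cases ha : α = 0
  · subst ha
    refine F4_nz_alpha H11 H12 H22 K1 K2 R β γ h1 hδ hR (fun hh => nz ⟨rfl, hh⟩) ?_
    intro x y
    rw [← h x y]
    congr 1
    ring
  by_cases hc : γ = 0
  · subst hc
    refine F4_nz_alpha H22 H12 H11 K2 K1 R β α h2 (by linarith) hR (fun hh => nz ⟨hh.2, hh.1, rfl⟩) ?_
    intro x y
    rw [← h y x]
    unfold F4
    ring
  by_cases h11 : α + 2*β + γ = 0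
  · have e := F4_nz_one H11 H12 H22 K1 K2 R α β γ h1 hδ h11 h
    have e1 : γ = -β := by linarith
    have e2 : α = -β := by linarith
    have e3 : a * b * (a + b - 1) = 0 := by
      have : (α * k) * (γ * k) = (β * k)^2 := by rw [e1, e2]; ring
      rw [hα, hβ, hγ] at this
      linear_combination -this
    have hab' : a * b = 0 := (mul_eq_zero.1 e3).resolve_right (fun hh => hab (by linarith))
    have hb0 : β = 0 := by
      rw [hab'] at hβ
      exact (mul_eq_zero.1 hβ).resolve_right hk
    exact ha (by linarith)
  · have hC := F4_map_complex H11 H12 H22 K1 K2 R α β γ (fun x => by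
      rw [← h x 1]; congr 1; ring)
    obtain ⟨x0, hx0⟩ : ∃ x0 : ℂ, (α:ℂ)*x0^2+2*β*x0+γ = 0 := by
      have hd : (Polynomial.C (α:ℂ) * Polynomial.X^2 + Polynomial.C (2*β:ℂ) * Polynomial.X + Polynomial.C (γ:ℂ)).degree = 2 :=
        Polynomial.degree_quadratic (by exact_mod_cast ha)
      obtain ⟨x0, hx0⟩ := IsAlgClosed.exists_root _ (by rw [hd]; norm_num)
      exact ⟨x0, by simpa [Polynomial.IsRoot] using hx0⟩
    have h3 := hC x0
    rw [hx0] at h3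
    have h4 : ((H11*H22-H12^2 : ℝ) : ℂ) * (x0*(x0-1))^2 = 0 := by
      push_cast
      unfold F4 at h3
      linear_combination -h3
    have h5 := (mul_eq_zero.1 h4).resolve_left (by exact_mod_cast hδ.ne')
    rcases mul_eq_zero.1 (pow_eq_zero_iff two_ne_zero |>.1 h5) with h6 | h6
    · rw [h6] at hx0
      apply hc
      have : (γ:ℂ) = 0 := by linear_combination hx0
      exact_mod_cast this
    · have h7 : x0 = 1 := by linear_combination h6
      rw [h7] at hx0
      apply h11
      have : ((α + 2*β+γ : ℝ):ℂ) = 0 := by push_cast; linear_combination hx0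
      exact_mod_cast this

lemma encard_cover {α β : Type*} (U : Set α) (hU : U.Finite) (f : α → Set β) (n : ℕ)
    (hf : ∀ u ∈ U, (f u).encard ≤ n) : (⋃ u ∈ U, f u).encard ≤ U.encard * n := by
  induction U, hU using Set.Finite.induction_on with
  | empty => simp
  | @insert a s ha hs ih =>
    rw [Set.biUnion_insert, Set.encard_insert_of_notMem ha, add_mul, one_mul, add_comm]
    refine (Set.encard_union_le _ _).trans ?_
    exact add_le_add (hf _ (Set.mem_insert _ _)) (ih fun u hu => hf u (Set.mem_insert_of_mem _ hu))

lemma encard_cover_le {α β : Type*} (S : Set β) (U : Set α) (f : α → Set β) (m n : ℕ)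
    (hU : U.encard ≤ m) (hf : ∀ u ∈ U, (f u).encard ≤ n) (hS : ∀ s ∈ S, ∃ u ∈ U, s ∈ f u) :
    S.encard ≤ ((m * n : ℕ) : ℕ∞) := by
  have hfin : U.Finite := Set.finite_of_encard_le_coe hU
  have h1 : S ⊆ ⋃ u ∈ U, f u := by
    intro s hs
    obtain ⟨u, hu, h⟩ := hS s hs
    exact Set.mem_biUnion hu h
  calc S.encard ≤ _ := Set.encard_le_encard h1
    _ ≤ U.encard * n := encard_cover U hfin f n hf
    _ ≤ (m : ℕ∞) * n := mul_le_mul_left hU _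
    _ = _ := by push_cast; rfl

lemma roots_encard_le (p : Polynomial ℝ) (hp : p ≠ 0) (n : ℕ) (hd : p.natDegree ≤ n) :
    {x : ℝ | p.eval x = 0}.encard ≤ n := by
  have : {x : ℝ | p.eval x = 0} = ((p.roots.toFinset : Finset ℝ) : Set ℝ) := by
    ext x
    simp [hp]
  rw [this, Set.encard_coe_eq_coe_finsetCard]
  exact_mod_cast (Multiset.toFinset_card_le _).trans ((Polynomial.card_roots' p).trans hd)

def sumPoly (n : ℕ) (f : ℕ → ℝ) : Polynomial ℝ :=
  ∑ i ∈ Finset.range (n+1), Polynomial.C (f i) * Polynomial.X ^ i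

lemma sumPoly_coeff (n : ℕ) (f : ℕ → ℝ) (i : ℕ) (hi : i ≤ n) : (sumPoly n f).coeff i = f i := by
  simp [sumPoly, Polynomial.finsetSum_coeff, Polynomial.coeff_C_mul, Polynomial.coeff_X_pow]
  omega

lemma sumPoly_deg (n : ℕ) (f : ℕ → ℝ) : (sumPoly n f).natDegree ≤ n := by
  apply Polynomial.natDegree_sum_le_of_forall_le
  intro i hi
  refine (Polynomial.natDegree_C_mul_X_pow_le _ _).trans ?_
  simp at hi; omega

lemma sumPoly_eval (n : ℕ) (f : ℕ → ℝ) (x : ℝ) :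
    (sumPoly n f).eval x = ∑ i ∈ Finset.range (n+1), f i * x ^ i := by
  simp [sumPoly, Polynomial.eval_finsetSum]

lemma sumPoly_ne (n : ℕ) (f : ℕ → ℝ) (hf : ∃ i ≤ n, f i ≠ 0) : sumPoly n f ≠ 0 := by
  obtain ⟨i, hi, h⟩ := hf
  intro h0
  apply h
  rw [← sumPoly_coeff n f i hi, h0, Polynomial.coeff_zero]

lemma poly_roots_le (n : ℕ) (f : ℕ → ℝ) (hf : ∃ i ≤ n, f i ≠ 0) :
    {x : ℝ | ∑ i ∈ Finset.range (n+1), f i * x ^ i = 0}.encard ≤ n := by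
  have := roots_encard_le _ (sumPoly_ne n f hf) n (sumPoly_deg n f)
  simpa only [sumPoly_eval] using this

lemma form_roots_le (n : ℕ) (f : ℕ → ℝ) (hf : ∃ i ≤ n, f i ≠ 0) :
    {z : ℝ × ℝ | (z.2 = 1 ∨ (z.1 = 1 ∧ z.2 = 0)) ∧
      ∑ i ∈ Finset.range (n+1), f i * z.1 ^ i * z.2 ^ (n - i) = 0}.encard ≤ n := by
  by_cases hn : f n = 0
  · obtain ⟨m, rfl⟩ : ∃ m, n = m + 1 := by
      rcases n with _ | m
      · obtain ⟨i, hi, h⟩ := hf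
        obtain rfl : i = 0 := by omega
        exact absurd hn h
      · exact ⟨m, rfl⟩
    have hf' : ∃ i ≤ m, f i ≠ 0 := by
      obtain ⟨i, hi, h⟩ := hf
      refine ⟨i, ?_, h⟩
      rcases Nat.lt_or_ge i (m+1) with h1 | h1
      · omega
      · obtain rfl : i = m + 1 := by omega
        exact absurd hn h
    have h1 := poly_roots_le m f hf'
    refine (Set.encard_le_encard (t := insert ((1:ℝ),(0:ℝ)) ((fun x : ℝ => (x, (1:ℝ))) '' _)) ?_).trans
      ((Set.encard_insert_le _ _).trans (add_le_add_left ((Set.encard_image_le _ _).trans h1) 1))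
    rintro ⟨x, y⟩ ⟨h | ⟨h, h'⟩, h2⟩
    · right
      refine ⟨x, ?_, by simp at h; simp [h]⟩
      simp only at h
      simp only [h, one_pow, mul_one] at h2
      rw [Finset.sum_range_succ, hn, zero_mul, add_zero] at h2
      exact h2
    · left
      simp only at h h'
      rw [h, h']
  · have h1 := poly_roots_le n f hf
    refine (Set.encard_le_encard (t := ((fun x : ℝ => (x, (1:ℝ))) '' _)) ?_).trans
      ((Set.encard_image_le _ _).trans h1)
    rintro ⟨x, y⟩ ⟨h | ⟨h, h'⟩, h2⟩
    · refine ⟨x, ?_, by simp at h; simp [h]⟩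
      simp only at h
      simp only [h, one_pow, mul_one] at h2
      exact h2
    · exfalso
      simp only at h h'
      simp only [h, h', one_pow, mul_one] at h2
      rw [Finset.sum_range_succ, Finset.sum_eq_zero] at h2
      · apply hn; simpa using h2
      · intro i hi
        simp at hi
        rw [zero_pow (by omega), mul_zero]

def RootsP (H11 H12 H22 K1 K2 R a b k : ℝ) : Set ((ℝ × ℝ) × ℝ) :=
  {u | (u.1.2 = 1 ∨ (u.1.1 = 1 ∧ u.1.2 = 0)) ∧
    k * u.2 = (a^2-a)*u.1.1^2 + 2*a*b*u.1.1*u.1.2 + (b^2-b)*u.1.2^2 ∧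
    F4 H11 H12 H22 K1 K2 R u.1.1 u.1.2 u.2 = 0}

lemma RootsP_ne (H11 H12 H22 K1 K2 R a b k : ℝ) (h1 : 0 < H11) (hδ : 0 < H11*H22-H12^2) (hR : 0 < R)
    (hk : k ≠ 0) (hab : a + b ≠ 1) (h00 : ¬ (a = 0 ∧ b = 0))
    (h10 : ¬ (a = 1 ∧ b = 0)) (h01 : ¬ (a = 0 ∧ b = 1)) :
    (RootsP H11 H12 H22 K1 K2 R a b k).encard ≤ 6 := by
  obtain ⟨f0, f1, f2, f3, f4, f5, f6, hF⟩ :=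
    F4_coef H11 H12 H22 K1 K2 R ((a^2-a)/k) (a*b/k) ((b^2-b)/k)
  let f : ℕ → ℝ := fun i => if i = 0 then f0 else if i = 1 then f1 else if i = 2 then f2 else
    if i = 3 then f3 else if i = 4 then f4 else if i = 5 then f5 else f6
  have hsum : ∀ x y : ℝ, ∑ i ∈ Finset.range (6+1), f i * x ^ i * y ^ (6 - i) =
      F4 H11 H12 H22 K1 K2 R x y ((a^2-a)/k*x^2+2*(a*b/k)*x*y+(b^2-b)/k*y^2) := by
    intro x y
    rw [hF]
    simp [Finset.sum_range_succ, f]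
  have hf : ∃ i ≤ 6, f i ≠ 0 := by
    by_contra! hc
    refine F4_nz H11 H12 H22 K1 K2 R a b k h1 hδ hR hk hab h00 h10 h01 ?_
    intro x y
    rw [← hsum]
    apply Finset.sum_eq_zero
    intro i hi
    simp at hi
    rw [hc i (by omega)]; ring
  have h6 := form_roots_le 6 f hf
  refine (Set.encard_le_encard (t := (fun z : ℝ × ℝ => (z, ((a^2-a)/k*z.1^2+2*(a*b/k)*z.1*z.2+(b^2-b)/k*z.2^2))) '' _) ?_).trans
      ((Set.encard_image_le _ _).trans h6)
  rintro ⟨⟨x, y⟩, t⟩ ⟨h2, h3, h4⟩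
  simp only at h2 h3 h4
  have ht : t = ((a^2-a)/k*x^2+2*(a*b/k)*x*y+(b^2-b)/k*y^2) := by
    field_simp
    linear_combination h3
  refine ⟨(x, y), ⟨h2, ?_⟩, ?_⟩
  · simp only
    rw [hsum, ← ht]; exact h4
  · simp only
    rw [← ht]

lemma posdef2 (H11 H12 H22 x y : ℝ) (h1 : 0 < H11) (hδ : 0 < H11*H22-H12^2) (h : x ≠ 0 ∨ y ≠ 0) :
    0 < H11*x^2+2*H12*x*y+H22*y^2 := by
  have e : H11 * (H11*x^2+2*H12*x*y+H22*y^2) = (H11*x+H12*y)^2 + (H11*H22-H12^2)*y^2 := by ring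
  have : 0 < H11 * (H11*x^2+2*H12*x*y+H22*y^2) := by
    rw [e]
    by_cases hy : y = 0
    · have hx := h.resolve_right (by simpa using hy)
      subst hy
      have : 0 < (H11 * x)^2 := by positivity
      simpa using this
    · have : 0 < (H11*H22-H12^2)*y^2 := by positivity
      positivity
  exact pos_of_mul_pos_right this h1.le

lemma RootsP_zero (H11 H12 H22 K1 K2 R a b : ℝ) (h1 : 0 < H11) (hδ : 0 < H11*H22-H12^2)
    (h00 : ¬ (a = 0 ∧ b = 0))
    (h10 : ¬ (a = 1 ∧ b = 0)) (h01 : ¬ (a = 0 ∧ b = 1)) :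
    (RootsP H11 H12 H22 K1 K2 R a b 0).encard ≤ 6 ∧
    (H11*K1^2+2*H12*K1*K2+H22*K2^2 = 4*R → (RootsP H11 H12 H22 K1 K2 R a b 0).encard ≤ 4) := by
  let q : ℕ → ℝ := fun i => if i = 0 then b^2-b else if i = 1 then 2*a*b else a^2-a
  have hq : ∃ i ≤ 2, q i ≠ 0 := by
    by_contra! hc
    have e0 := hc 0 (by norm_num)
    have e1 := hc 1 (by norm_num)
    have e2 := hc 2 (by norm_num)
    simp [q] at e0 e1 e2
    have ha : a * (a - 1) = 0 := by linear_combination e2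
    have hb : b * (b - 1) = 0 := by linear_combination e0
    rcases mul_eq_zero.1 ha with ha | ha <;> rcases mul_eq_zero.1 hb with hb | hb
    · exact h00 ⟨ha, hb⟩
    · exact h01 ⟨ha, by linarith⟩
    · exact h10 ⟨by linarith, hb⟩
    · have : a = 1 := by linarith
      have : b = 1 := by linarith
      subst_vars
      norm_num at e1
  have hU := form_roots_le 2 q hq
  let g : ℝ × ℝ → ℕ → ℝ := fun z i =>
    if i = 0 then -(H11*H22-H12^2)*(z.1*z.2*(z.1-z.2))^2
    else if i = 1 then 2*(H11*H22-H12^2)*(K1*z.2-K2*z.1)*(z.1*z.2*(z.1-z.2)) +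
      (H11*(z.1^2)^2+2*H12*(z.1^2)*(z.2^2)+H22*(z.2^2)^2)
    else if i = 2 then -(H11*H22-H12^2)*(K1*z.2-K2*z.1)^2
      -2*(H11*K1*z.1^2+H12*(K1*z.2^2+K2*z.1^2)+H22*K2*z.2^2) + 4*R*(H11*z.1^2+2*H12*z.1*z.2+H22*z.2^2)
    else H11*K1^2+2*H12*K1*K2+H22*K2^2 - 4*R
  have hg : ∀ z : ℝ × ℝ, (z.2 = 1 ∨ (z.1 = 1 ∧ z.2 = 0)) → g z 0 ≠ 0 ∨ g z 1 ≠ 0 := by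
    rintro ⟨x, y⟩ hz
    by_contra! hc
    obtain ⟨e0, e1⟩ := hc
    simp [g] at e0 e1
    have e : x*y*(x-y) = 0 := by
      rcases e0 with e0 | e0
      · exact absurd e0 (by intro h; linarith)
      · rcases e0 with (e0 | e0) | e0 <;> rw [e0] <;> ring
    rw [e] at e1
    have := posdef2 H11 H12 H22 (x^2) (y^2) h1 hδ (by
      rcases hz with hz | hz
      · right; simp at hz; simp [hz]
      · left; simp at hz; simp [hz.1])
    linarith
  have hF : ∀ x y t, F4 H11 H12 H22 K1 K2 R x y t = ∑ i ∈ Finset.range (3+1), g (x,y) i * t^i := by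
    intro x y t
    simp [Finset.sum_range_succ, g, F4]
    ring
  have main : ∀ n : ℕ, 1 ≤ n → (∀ x y t, F4 H11 H12 H22 K1 K2 R x y t = ∑ i ∈ Finset.range (n+1), g (x,y) i * t^i) →
      (RootsP H11 H12 H22 K1 K2 R a b 0).encard ≤ ((2 * n : ℕ) : ℕ∞) := by
    intro n hn hF
    refine encard_cover_le _ _ (fun z => (fun t => (z, t)) '' {x : ℝ | ∑ i ∈ Finset.range (n+1), g z i * x ^ i = 0}) 2 n hU ?_ ?_
    · rintro z ⟨hz, -⟩
      refine (Set.encard_image_le _ _).trans (poly_roots_le n _ ?_)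
      rcases hg z hz with h | h
      · exact ⟨0, by omega, h⟩
      · exact ⟨1, hn, h⟩
    · rintro ⟨⟨x, y⟩, t⟩ ⟨h2, h3, h4⟩
      refine ⟨(x, y), ⟨h2, ?_⟩, ⟨t, ?_, rfl⟩⟩
      · simp at h3
        simp [Finset.sum_range_succ, q]
        linear_combination -h3
      · rw [hF] at h4
        exact h4
  refine ⟨by simpa using main 3 (by norm_num) hF, fun hh => ?_⟩
  have := main 2 (by norm_num) (by
    intro x y t
    rw [hF, Finset.sum_range_succ]
    have : g (x,y) 3 = 0 := by simp [g]; linarith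
    rw [this]; ring)
  simpa using this

structure PP (H11 H12 H22 K1 K2 K3 R a b x y z X Y Z : ℝ) : Prop where
  ne : x ≠ 0 ∨ y ≠ 0 ∨ z ≠ 0
  orth : H11*X*x + H12*(X*y+Y*x) + H22*Y*y + Z*z = 0
  len : H11*X^2+2*H12*X*Y+H22*Y^2+Z^2 = R
  e1 : 2*X*(H11*x^2+2*H12*x*y+H22*y^2+z^2) = K1*(H11*x^2+2*H12*x*y+H22*y^2+z^2) - x^2
  e2 : 2*Y*(H11*x^2+2*H12*x*y+H22*y^2+z^2) = K2*(H11*x^2+2*H12*x*y+H22*y^2+z^2) - y^2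
  e3 : 2*(a*X+b*Y)*(H11*x^2+2*H12*x*y+H22*y^2+z^2) =
    K3*(H11*x^2+2*H12*x*y+H22*y^2+z^2) - (a*x+b*y)^2

lemma PP.smul {H11 H12 H22 K1 K2 K3 R a b x y z X Y Z : ℝ} (h : PP H11 H12 H22 K1 K2 K3 R a b x y z X Y Z)
    (s : ℝ) (hs : s ≠ 0) : PP H11 H12 H22 K1 K2 K3 R a b (s*x) (s*y) (s*z) X Y Z where
  ne := by simpa [hs] using h.ne
  orth := by linear_combination s * h.orth
  len := h.len
  e1 := by linear_combination s^2 * h.e1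
  e2 := by linear_combination s^2 * h.e2
  e3 := by linear_combination s^2 * h.e3

lemma PP.pos {H11 H12 H22 K1 K2 K3 R a b x y z X Y Z : ℝ} (h : PP H11 H12 H22 K1 K2 K3 R a b x y z X Y Z)
    (h1 : 0 < H11) (hδ : 0 < H11*H22-H12^2) : 0 < H11*x^2+2*H12*x*y+H22*y^2+z^2 := by
  by_cases hxy : x ≠ 0 ∨ y ≠ 0
  · have := posdef2 H11 H12 H22 x y h1 hδ hxy
    positivity
  · push Not at hxy
    have hz : z ≠ 0 := by
      rcases h.ne with h | h | h
      · exact absurd hxy.1 h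
      · exact absurd hxy.2 h
      · exact h
    rw [hxy.1, hxy.2]
    have : 0 < z^2 := by positivity
    linarith

lemma PP.root {H11 H12 H22 K1 K2 K3 R a b x y z X Y Z : ℝ} (h : PP H11 H12 H22 K1 K2 K3 R a b x y z X Y Z)
    (hn : y = 1 ∨ (x = 1 ∧ y = 0)) :
    ((x, y), H11*x^2+2*H12*x*y+H22*y^2+z^2) ∈ RootsP H11 H12 H22 K1 K2 R a b (K3-a*K1-b*K2) := by
  refine ⟨hn, ?_, ?_⟩
  · simp only
    linear_combination a * h.e1 + b * h.e2 - h.e3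
  · simp only
    have e1 := h.e1
    have e2 := h.e2
    obtain ⟨t, ht⟩ : ∃ t, t = H11*x^2+2*H12*x*y+H22*y^2+z^2 := ⟨_, rfl⟩
    rw [← ht] at e1 e2 ⊢
    have f1 : K1*t = 2*X*t + x^2 := by linear_combination -e1
    have f2 : K2*t = 2*Y*t + y^2 := by linear_combination -e2
    have g1 : t*(K1*y-K2*x) - x*y*(x-y) = 2*t*(X*y-Y*x) := by
      linear_combination y*f1 - x * f2
    have g2 : K1*t-x^2 = 2*X*t := by linear_combination f1
    have g3 : K2*t-y^2 = 2*Y*t := by linear_combination f2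
    unfold F4
    rw [g1, g2, g3, ← h.len]
    have o2 : (H11*X*x + H12*(X*y+Y*x) + H22*Y*y)^2 = Z^2*z^2 := by
      have : H11*X*x + H12*(X*y+Y*x) + H22*Y*y = -(Z*z) := by linear_combination h.orth
      rw [this]; ring
    have ht2 : z^2 = t - (H11*x^2+2*H12*x*y+H22*y^2) := by linarith
    rw [ht2] at o2
    linear_combination 4*t^2*o2

def pairOf {α : Type*} (L : ℝ → ℝ → ℝ → ℝ → ℝ → ℝ → α) (H11 H12 H22 K1 K2 R : ℝ) (u : (ℝ × ℝ) × ℝ) : Set α :=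
  let x := u.1.1
  let y := u.1.2
  let t := u.2
  let X := (K1*t-x^2)/(2*t)
  let Y := (K2*t-y^2)/(2*t)
  let z := √(t - (H11*x^2+2*H12*x*y+H22*y^2))
  let Z := if z = 0 then √(R - (H11*X^2+2*H12*X*Y+H22*Y^2)) else
    -(H11*X*x + H12*(X*y+Y*x) + H22*Y*y)/z
  {L x y z X Y Z, L x y (-z) X Y (-Z)}

lemma PP.mem_pair {α : Type*} (L : ℝ → ℝ → ℝ → ℝ → ℝ → ℝ → α)
    {H11 H12 H22 K1 K2 K3 R a b x y z X Y Z : ℝ} (h : PP H11 H12 H22 K1 K2 K3 R a b x y z X Y Z)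
    (h1 : 0 < H11) (hδ : 0 < H11*H22-H12^2) :
    L x y z X Y Z ∈ pairOf L H11 H12 H22 K1 K2 R ((x, y), H11*x^2+2*H12*x*y+H22*y^2+z^2) := by
  have hp := h.pos h1 hδ
  have e1 := h.e1
  have e2 := h.e2
  have hX : (K1*(H11*x^2+2*H12*x*y+H22*y^2+z^2)-x^2)/(2*(H11*x^2+2*H12*x*y+H22*y^2+z^2)) = X := by
    rw [div_eq_iff (by positivity)]
    linear_combination -e1
  have hY : (K2*(H11*x^2+2*H12*x*y+H22*y^2+z^2)-y^2)/(2*(H11*x^2+2*H12*x*y+H22*y^2+z^2)) = Y := by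
    rw [div_eq_iff (by positivity)]
    linear_combination -e2
  have hz : H11*x^2+2*H12*x*y+H22*y^2+z^2 - (H11*x^2+2*H12*x*y+H22*y^2) = z^2 := by ring
  simp only [pairOf, hX, hY, hz, Real.sqrt_sq_eq_abs]
  have hZ : R - (H11*X^2+2*H12*X*Y+H22*Y^2) = Z^2 := by linear_combination -h.len
  rw [hZ, Real.sqrt_sq_eq_abs]
  have ho : -(H11*X*x + H12*(X*y+Y*x) + H22*Y*y) = Z * z := by linear_combination -h.orth
  rw [ho]
  by_cases hz0 : z = 0
  · subst hz0
    simp only [abs_zero, if_true, neg_zero]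
    rcases abs_choice Z with hh | hh <;> rw [hh] <;> simp
  · have : |z| ≠ 0 := by simpa using hz0
    rw [if_neg this]
    rcases abs_choice z with hh | hh <;> rw [hh]
    · left
      rw [mul_div_assoc, div_self hz0, mul_one]
    · right
      rw [neg_neg, mul_div_assoc, div_neg, div_self hz0, mul_neg, mul_one, neg_neg]
      rfl

theorem planar_core {α : Type*} (L : ℝ → ℝ → ℝ → ℝ → ℝ → ℝ → α)
    (hL : ∀ s x y z X Y Z, s ≠ 0 → L (s*x) (s*y) (s*z) X Y Z = L x y z X Y Z)
    (H11 H12 H22 K1 K2 K3 R a b : ℝ)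
    (h1 : 0 < H11) (hδ : 0 < H11*H22-H12^2) (hR : 0 < R)
    (hab : a + b ≠ 1) (h00 : ¬ (a = 0 ∧ b = 0)) (h10 : ¬ (a = 1 ∧ b = 0)) (h01 : ¬ (a = 0 ∧ b = 1)) :
    {l | ∃ x y z X Y Z, PP H11 H12 H22 K1 K2 K3 R a b x y z X Y Z ∧ l = L x y z X Y Z}.encard ≤ 12 := by
  obtain ⟨k, hk⟩ : ∃ k, k = K3-a*K1-b*K2 := ⟨_, rfl⟩
  let N := {l | ∃ x y z X Y Z, PP H11 H12 H22 K1 K2 K3 R a b x y z X Y Z ∧ l = L x y z X Y Z ∧ (x ≠ 0 ∨ y ≠ 0)}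
  have hN : ∀ m : ℕ, (RootsP H11 H12 H22 K1 K2 R a b k).encard ≤ m → N.encard ≤ ((m * 2 : ℕ) : ℕ∞) := by
    intro m hm
    refine encard_cover_le N _ (pairOf L H11 H12 H22 K1 K2 R) m 2 hm ?_ ?_
    · intro u _
      refine (Set.encard_insert_le _ _).trans ?_
      rw [Set.encard_singleton]
      norm_num
    · rintro l ⟨x, y, z, X, Y, Z, hP, rfl, hxy⟩
      obtain ⟨s, hs, hn⟩ : ∃ s : ℝ, s ≠ 0 ∧ (s*y = 1 ∨ (s*x = 1 ∧ s*y = 0)) := by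
        by_cases hy : y = 0
        · have hx := hxy.resolve_right (by simpa using hy)
          exact ⟨x⁻¹, inv_ne_zero hx, Or.inr ⟨inv_mul_cancel₀ hx, by simp [hy]⟩⟩
        · exact ⟨y⁻¹, inv_ne_zero hy, Or.inl (inv_mul_cancel₀ hy)⟩
      have hP' := hP.smul s hs
      refine ⟨_, hk ▸ hP'.root hn, ?_⟩
      rw [← hL s x y z X Y Z hs]
      exact hP'.mem_pair L h1 hδ
  by_cases hv : ∃ z X Y Z, PP H11 H12 H22 K1 K2 K3 R a b 0 0 z X Y Z
  · have hfact : ∀ z X Y Z, PP H11 H12 H22 K1 K2 K3 R a b 0 0 z X Y Z → z ≠ 0 ∧ X = K1/2 ∧ Y = K2/2 ∧ Z = 0 := by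
      intro z X Y Z h
      have hz : z ≠ 0 := by simpa using h.ne
      have hz2 : z^2 ≠ 0 := pow_ne_zero 2 hz
      refine ⟨hz, ?_, ?_, ?_⟩
      · apply mul_right_cancel₀ hz2
        linear_combination h.e1/2
      · apply mul_right_cancel₀ hz2
        linear_combination h.e2/2
      · apply mul_right_cancel₀ hz
        linear_combination h.orth
    have hk0 : k = 0 ∧ H11*K1^2+2*H12*K1*K2+H22*K2^2 = 4*R := by
      obtain ⟨z, X, Y, Z, h⟩ := hv
      obtain ⟨hz, hX, hY, hZ⟩ := hfact z X Y Z h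
      have hz2 : z^2 ≠ 0 := pow_ne_zero 2 hz
      have e3 := h.e3
      have e4 := h.len
      rw [hX, hY, hZ] at e4
      rw [hX, hY] at e3
      constructor
      · apply mul_right_cancel₀ hz2
        rw [hk]
        linear_combination -e3
      · linear_combination 4 * e4
    have hr := (RootsP_zero H11 H12 H22 K1 K2 R a b h1 hδ h00 h10 h01).2 hk0.2
    rw [← hk0.1] at hr
    have h8 := hN 4 (by exact_mod_cast hr)
    refine (Set.encard_le_encard (t := insert (L 0 0 1 (K1/2) (K2/2) 0) N) ?_).trans
      ((Set.encard_insert_le _ _).trans ((add_le_add_left h8 1).trans (by norm_num)))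
    rintro l ⟨x, y, z, X, Y, Z, hP, rfl⟩
    by_cases hxy : x ≠ 0 ∨ y ≠ 0
    · right
      exact ⟨x, y, z, X, Y, Z, hP, rfl, hxy⟩
    · left
      push Not at hxy
      obtain ⟨rfl, rfl⟩ := hxy
      obtain ⟨hz, rfl, rfl, rfl⟩ := hfact z X Y Z hP
      have := hL z 0 0 1 (K1/2) (K2/2) 0 hz
      simpa using this
  · have hr : (RootsP H11 H12 H22 K1 K2 R a b k).encard ≤ 6 := by
      by_cases hk0 : k = 0
      · rw [hk0]
        exact (RootsP_zero H11 H12 H22 K1 K2 R a b h1 hδ h00 h10 h01).1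
      · exact RootsP_ne H11 H12 H22 K1 K2 R a b k h1 hδ hR hk0 hab h00 h10 h01
    have h8 := hN 6 (by exact_mod_cast hr)
    refine (Set.encard_le_encard (t := N) ?_).trans (h8.trans (by norm_num))
    rintro l ⟨x, y, z, X, Y, Z, hP, rfl⟩
    refine ⟨x, y, z, X, Y, Z, hP, rfl, ?_⟩
    by_contra hxy
    push Not at hxy
    obtain ⟨rfl, rfl⟩ := hxy
    exact hv ⟨z, X, Y, Z, hP⟩

def crs (x y : Fin 3 → ℝ) : Fin 3 → ℝ :=
  ![x 1 * y 2 - x 2 * y 1, x 2 * y 0 - x 0 * y 2, x 0 * y 1 - x 1 * y 0]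

theorem coplanar_case (d : Fin 3 → Fin 3 → ℝ) (K : Fin 3 → ℝ) (r : ℝ) (c : Pt3) (hr : 0 < r) (a b : ℝ)
    (hd : d 2 = a • d 0 + b • d 1)
    (hδ : 0 < dt3 (d 0) (d 0) * dt3 (d 1) (d 1) - dt3 (d 0) (d 1)^2)
    (hab : a + b ≠ 1) (h00 : ¬ (a = 0 ∧ b = 0)) (h10 : ¬ (a = 1 ∧ b = 0)) (h01 : ¬ (a = 0 ∧ b = 1)) :
    {l | ∃ p v, TP3 d K r p v ∧ l = lineP3 c p v}.encard ≤ 12 := by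
  obtain ⟨D, hD⟩ : ∃ D, D = dt3 (d 0) (d 0) * dt3 (d 1) (d 1) - dt3 (d 0) (d 1)^2 := ⟨_, rfl⟩
  rw [← hD] at hδ
  obtain ⟨s, hs⟩ : ∃ s : ℝ, s^2 * D = 1 := ⟨(√D)⁻¹, by
    rw [inv_pow, Real.sq_sqrt hδ.le, inv_mul_cancel₀ hδ.ne']⟩
  obtain ⟨H11, hH11⟩ : ∃ H, H = dt3 (d 1) (d 1) / D := ⟨_, rfl⟩
  obtain ⟨H12, hH12⟩ : ∃ H, H = -dt3 (d 0) (d 1) / D := ⟨_, rfl⟩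
  obtain ⟨H22, hH22⟩ : ∃ H, H = dt3 (d 0) (d 0) / D := ⟨_, rfl⟩
  have k11 : H11 * D = dt3 (d 1) (d 1) := by rw [hH11, div_mul_cancel₀ _ hδ.ne']
  have k12 : H12 * D = -dt3 (d 0) (d 1) := by rw [hH12, div_mul_cancel₀ _ hδ.ne']
  have k22 : H22 * D = dt3 (d 0) (d 0) := by rw [hH22, div_mul_cancel₀ _ hδ.ne']
  let n := s • crs (d 0) (d 1)
  have hdec : ∀ p : Fin 3 → ℝ, p = dt3 (d 0) p • (H11 • d 0 + H12 • d 1) +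
      dt3 (d 1) p • (H12 • d 0 + H22 • d 1) + dt3 n p • n := by
    intro p
    have key : ∀ i, p i * D = (dt3 (d 0) p * (H11 * d 0 i + H12 * d 1 i) +
      dt3 (d 1) p * (H12 * d 0 i + H22 * d 1 i)) * D + dt3 (crs (d 0) (d 1)) p * crs (d 0) (d 1) i := by
      intro i
      have : (dt3 (d 0) p * (H11 * d 0 i + H12 * d 1 i) +
        dt3 (d 1) p * (H12 * d 0 i + H22 * d 1 i)) * D = 
        dt3 (d 0) p * ((H11*D) * d 0 i + (H12*D) * d 1 i) +
        dt3 (d 1) p * ((H12*D) * d 0 i + (H22*D) * d 1 i) := by ring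
      rw [this, k11, k12, k22, hD]
      fin_cases i <;> simp [dt3, crs] <;> ring
    funext i
    apply mul_right_cancel₀ hδ.ne'
    rw [key i]
    have e : dt3 n p = s * dt3 (crs (d 0) (d 1)) p := by
      simp [n, dt3]; ring
    simp only [Pi.add_apply, Pi.smul_apply, smul_eq_mul, e, n]
    linear_combination (-dt3 (crs (d 0) (d 1)) p * crs (d 0) (d 1) i) * hs
  have hdt : ∀ p v : Fin 3 → ℝ, dt3 p v = H11 * dt3 (d 0) p * dt3 (d 0) v +
      H12 * (dt3 (d 0) p * dt3 (d 1) v + dt3 (d 1) p * dt3 (d 0) v) + H22 * dt3 (d 1) p * dt3 (d 1) v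
      + dt3 n p * dt3 n v := by
    intro p v
    have e : dt3 p v = dt3 (d 0) p * (H11 * dt3 (d 0) v + H12 * dt3 (d 1) v) +
      dt3 (d 1) p * (H12 * dt3 (d 0) v + H22 * dt3 (d 1) v) + dt3 n p * dt3 n v := by
      conv_lhs => rw [hdec p]
      generalize dt3 (d 0) p = A
      generalize dt3 (d 1) p = B
      generalize dt3 n p = C
      simp only [dt3, Pi.add_apply, Pi.smul_apply, smul_eq_mul]
      ring
    rw [e]; ring
  let L : ℝ → ℝ → ℝ → ℝ → ℝ → ℝ → Set Pt3 := fun x y z X Y Z =>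
    lineP3 c (X • (H11 • d 0 + H12 • d 1) + Y • (H12 • d 0 + H22 • d 1) + Z • n)
      (x • (H11 • d 0 + H12 • d 1) + y • (H12 • d 0 + H22 • d 1) + z • n)
  have hL : ∀ s x y z X Y Z, s ≠ 0 → L (s*x) (s*y) (s*z) X Y Z = L x y z X Y Z := by
    intro s x y z X Y Z hs
    simp only [L]
    rw [← lineP3_smul c _ (x • _ + _ + _) s hs]
    congr 1
    module
  have hdet : H11*H22-H12^2 = 1/D := by
    rw [hH11, hH12, hH22, eq_div_iff hδ.ne']
    field_simp
    rw [hD]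
    ring
  have hg : 0 < dt3 (d 1) (d 1) := by
    apply dt3_pos
    intro h
    rw [hD, h] at hδ
    simp [dt3] at hδ
  have := planar_core L hL H11 H12 H22 (K 0) (K 1) (K 2) (r^2) a b (by rw [hH11]; positivity)
    (by rw [hdet]; positivity) (by positivity) hab h00 h10 h01
  refine (Set.encard_le_encard ?_).trans this
  rintro l ⟨p, v, ⟨hv, h1, h2, h3⟩, rfl⟩
  refine ⟨dt3 (d 0) v, dt3 (d 1) v, dt3 n v, dt3 (d 0) p, dt3 (d 1) p, dt3 n p, ?_, ?_⟩
  · have hcomm : ∀ x y, dt3 x y = dt3 y x := by intro x y; simp [dt3]; ring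
    have hvv : dt3 v v = H11*(dt3 (d 0) v)^2+2*H12*dt3 (d 0) v*dt3 (d 1) v+H22*(dt3 (d 1) v)^2+(dt3 n v)^2 := by
      rw [hdt v v]; ring
    have e0 := h3 0
    have e1 := h3 1
    have e2 := h3 2
    have hl2 : ∀ q, dt3 (d 2) q = a * dt3 (d 0) q + b * dt3 (d 1) q := by
      intro q; rw [hd]; simp [dt3]; ring
    rw [hcomm p] at e0 e1 e2
    rw [hl2, hl2] at e2
    rw [hvv] at e0 e1 e2
    refine ⟨?_, ?_, ?_, e0, e1, e2⟩
    · by_contra! hc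
      apply hv
      rw [hdec v, hc.1, hc.2.1, hc.2.2]
      simp
    · rw [← h1, hdt p v]
    · rw [← h2, hdt p p]; ring
  · simp only [L]
    rw [← hdec p, ← hdec v]

def sub3 (x y : Pt3) : Fin 3 → ℝ := fun j => x j - y j

lemma mem_sphere3 (x c : Pt3) (ρ : ℝ) (hρ : 0 < ρ) :
    x ∈ Metric.sphere c ρ ↔ dt3 (sub3 x c) (sub3 x c) = ρ^2 := by
  rw [Metric.mem_sphere, EuclideanSpace.dist_eq, Real.sqrt_eq_iff_eq_sq (by positivity) hρ.le]
  simp only [Fin.sum_univ_three, Real.dist_eq, sq_abs, dt3, sub3]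
  simp only [sq]

lemma tangent_disc (a v c : Pt3) (ρ : ℝ) (hρ : 0 < ρ) (hv : (v : Fin 3 → ℝ) ≠ 0)
    (h : Tangent3 (lineThrough3 a v) (Metric.sphere c ρ)) :
    dt3 (sub3 a c) v ^ 2 = dt3 v v * (dt3 (sub3 a c) (sub3 a c) - ρ^2) := by
  obtain ⟨p, hp⟩ := h
  have hN := dt3_pos _ hv
  have hmem : ∀ t : ℝ, a + t • v ∈ Metric.sphere c ρ ↔
      dt3 (sub3 a c) (sub3 a c) + 2 * t * dt3 (sub3 a c) v + t^2 * dt3 v v = ρ^2 := by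
    intro t
    rw [mem_sphere3 _ _ _ hρ]
    have : dt3 (sub3 (a + t • v) c) (sub3 (a + t • v) c) =
      dt3 (sub3 a c) (sub3 a c) + 2 * t * dt3 (sub3 a c) v + t^2 * dt3 v v := by
      simp [dt3, sub3]; ring
    rw [this]
  have hpm : p ∈ lineThrough3 a v ∩ Metric.sphere c ρ := by rw [hp]; rfl
  obtain ⟨⟨t, rfl⟩, h2⟩ := hpm
  rw [hmem] at h2
  obtain ⟨B, hB⟩ : ∃ B, B = dt3 (sub3 a c) v := ⟨_, rfl⟩
  obtain ⟨N, hN'⟩ : ∃ N, N = dt3 v v := ⟨_, rfl⟩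
  obtain ⟨A, hA⟩ : ∃ A, A = dt3 (sub3 a c) (sub3 a c) := ⟨_, rfl⟩
  rw [← hN'] at hN
  rw [← hB, ← hN', ← hA] at h2 ⊢
  obtain ⟨s, hs⟩ : ∃ s, N * (s + t) = -2*B := ⟨-2*B/N - t, by field_simp; ring⟩
  have h3 : a + s • v ∈ lineThrough3 a v ∩ Metric.sphere c ρ := by
    refine ⟨⟨s, rfl⟩, ?_⟩
    rw [hmem, ← hB, ← hN', ← hA]
    linear_combination h2 + (s - t) * hs
  rw [hp] at h3
  have h4 : s • v = t • v := add_left_cancel h3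
  have h5 : s = t := by
    by_contra hne
    apply hv
    have : (s - t) • v = 0 := by rw [sub_smul, h4, sub_self]
    have h6 := (smul_eq_zero.1 this).resolve_left (sub_ne_zero.2 hne)
    rw [h6]; rfl
  subst h5
  have h6 : B = -N*s := by linarith
  rw [h6] at h2 ⊢
  linear_combination -N * h2

def CT4 (c1 c2 c3 c4 : Pt3) (r1 r2 r3 r4 : ℝ) : Set (Set Pt3) :=
  {l : Set Pt3 | IsLine3 l ∧ Tangent3 l (Metric.sphere c1 r1) ∧
        Tangent3 l (Metric.sphere c2 r2) ∧ Tangent3 l (Metric.sphere c3 r3) ∧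
        Tangent3 l (Metric.sphere c4 r4)}

def dvec (c1 c2 c3 c4 : Pt3) : Fin 3 → Fin 3 → ℝ := ![sub3 c1 c4, sub3 c2 c4, sub3 c3 c4]

lemma reduction (c1 c2 c3 c4 : Pt3) (r1 r2 r3 r4 : ℝ)
    (hr1 : 0 < r1) (hr2 : 0 < r2) (hr3 : 0 < r3) (hr4 : 0 < r4) :
    ∃ K, CT4 c1 c2 c3 c4 r1 r2 r3 r4 ⊆ {l | ∃ p v, TP3 (dvec c1 c2 c3 c4) K r4 p v ∧ l = lineP3 c4 p v} := by
  refine ⟨![r4^2 + dt3 (sub3 c1 c4) (sub3 c1 c4) - r1^2, r4^2 + dt3 (sub3 c2 c4) (sub3 c2 c4) - r2^2,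
    r4^2 + dt3 (sub3 c3 c4) (sub3 c3 c4) - r3^2], ?_⟩
  rintro l ⟨⟨a, v, hv, rfl⟩, h1, h2, h3, h4⟩
  have hv' : (v : Fin 3 → ℝ) ≠ 0 := by
    intro h
    apply hv
    ext i
    exact congrFun h i
  have hN := dt3_pos _ hv'
  have e1 := tangent_disc a v c1 r1 hr1 hv' h1
  have e2 := tangent_disc a v c2 r2 hr2 hv' h2
  have e3 := tangent_disc a v c3 r3 hr3 hv' h3
  have e4 := tangent_disc a v c4 r4 hr4 hv' h4
  obtain ⟨s, hs⟩ : ∃ s, s * dt3 v v = dt3 (sub3 a c4) v := ⟨_, div_mul_cancel₀ _ hN.ne'⟩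
  refine ⟨sub3 a c4 - s • (v : Fin 3 → ℝ), v, ⟨hv', ?_, ?_, ?_⟩, ?_⟩
  · have : dt3 (sub3 a c4 - s • (v : Fin 3 → ℝ)) v = dt3 (sub3 a c4) v - s * dt3 v v := by
      simp [dt3]; ring
    rw [this, hs, sub_self]
  · have : dt3 (sub3 a c4 - s • (v : Fin 3 → ℝ)) (sub3 a c4 - s • (v : Fin 3 → ℝ)) =
      dt3 (sub3 a c4) (sub3 a c4) - 2 * s * dt3 (sub3 a c4) v + s^2 * dt3 v v := by
      simp [dt3]; ring
    rw [this]
    apply mul_right_cancel₀ hN.ne'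
    rw [← hs] at e4 ⊢
    linear_combination -e4
  · have key : ∀ (c : Pt3) (ρ : ℝ),
        dt3 (sub3 a c) v ^ 2 = dt3 v v * (dt3 (sub3 a c) (sub3 a c) - ρ^2) →
        2 * dt3 (sub3 a c4 - s • (v : Fin 3 → ℝ)) (sub3 c c4) * dt3 v v =
          (r4^2 + dt3 (sub3 c c4) (sub3 c c4) - ρ^2) * dt3 v v - (dt3 (sub3 c c4) v)^2 := by
      intro c ρ e
      have f1 : dt3 (sub3 a c) v = dt3 (sub3 a c4) v - dt3 (sub3 c c4) v := by
        simp [dt3, sub3]; ring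
      have f2 : dt3 (sub3 a c) (sub3 a c) = dt3 (sub3 a c4) (sub3 a c4) - 2 * dt3 (sub3 a c4) (sub3 c c4)
          + dt3 (sub3 c c4) (sub3 c c4) := by
        simp [dt3, sub3]; ring
      have f3 : dt3 (sub3 a c4 - s • (v : Fin 3 → ℝ)) (sub3 c c4) =
          dt3 (sub3 a c4) (sub3 c c4) - s * dt3 (sub3 c c4) v := by
        simp [dt3]; ring
      rw [f1, f2] at e
      rw [f3]
      linear_combination e - e4 - 2 * dt3 (sub3 c c4) v * hs
    intro i
    fin_cases i
    · exact key c1 r1 e1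
    · exact key c2 r2 e2
    · exact key c3 r3 e3
  · have hp : c4 + WithLp.toLp 2 (sub3 a c4 - s • (v : Fin 3 → ℝ)) = a + (-s) • v := by
      ext i
      simp [sub3]; ring
    unfold lineP3
    rw [hp]
    ext x
    constructor
    · rintro ⟨t, rfl⟩
      refine ⟨t + s, ?_⟩
      change a + t • v = a + (-s) • v + (t + s) • v
      module
    · rintro ⟨t, rfl⟩
      refine ⟨t - s, ?_⟩
      change a + (-s) • v + t • v = a + (t - s) • v
      module

lemma same_center (a : Set Pt3) (ha : IsLine3 a) (c : Pt3) (ρ σ : ℝ) (hρ : 0 < ρ) (hσ : 0 < σ)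
    (h1 : Tangent3 a (Metric.sphere c ρ)) (h2 : Tangent3 a (Metric.sphere c σ)) : ρ = σ := by
  obtain ⟨p, v, hv, rfl⟩ := ha
  have hv' : (v : Fin 3 → ℝ) ≠ 0 := by
    intro h
    apply hv
    ext i
    exact congrFun h i
  have hN := dt3_pos _ hv'
  have e1 := tangent_disc p v c ρ hρ hv' h1
  have e2 := tangent_disc p v c σ hσ hv' h2
  have : dt3 v v * (ρ^2 - σ^2) = 0 := by linear_combination e1 - e2
  have h3 := (mul_eq_zero.1 this).resolve_left hN.ne'
  exact (pow_left_inj₀ hρ.le hσ.le two_ne_zero).1 (by linarith)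

def gram (u w : Fin 3 → ℝ) : ℝ := dt3 u u * dt3 w w - dt3 u w ^ 2

lemma gram_eq (u w : Fin 3 → ℝ) : gram u w = dt3 (crs u w) (crs u w) := by
  simp [gram, dt3, crs]; ring

lemma gram_nonneg (u w : Fin 3 → ℝ) : 0 ≤ gram u w := by
  rw [gram_eq]
  unfold dt3
  nlinarith [mul_self_nonneg (crs u w 0), mul_self_nonneg (crs u w 1), mul_self_nonneg (crs u w 2)]

lemma gram_dec (u w t : Fin 3 → ℝ) (hg : 0 < gram u w) (h : dt3 (crs u w) t = 0) :
    ∃ a b : ℝ, t = a • u + b • w := by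
  refine ⟨(dt3 w w * dt3 u t - dt3 u w * dt3 w t) / gram u w,
    (dt3 u u * dt3 w t - dt3 u w * dt3 u t) / gram u w, ?_⟩
  funext i
  simp only [Pi.add_apply, Pi.smul_apply, smul_eq_mul]
  have key : t i * gram u w = (dt3 w w * dt3 u t - dt3 u w * dt3 w t) * u i +
    (dt3 u u * dt3 w t - dt3 u w * dt3 u t) * w i + dt3 (crs u w) t * crs u w i := by
    fin_cases i <;> simp [gram, dt3, crs] <;> ring
  rw [h, zero_mul, add_zero] at key
  field_simp
  linear_combination key

lemma gram_zero (u w : Fin 3 → ℝ) (hu : u ≠ 0) (h : gram u w = 0) : ∃ a : ℝ, w = a • u := by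
  have hp := dt3_pos u hu
  refine ⟨dt3 u w / dt3 u u, ?_⟩
  have : dt3 u u • w - dt3 u w • u = 0 := by
    by_contra hne
    have := dt3_pos _ hne
    have e : dt3 (dt3 u u • w - dt3 u w • u) (dt3 u u • w - dt3 u w • u) = dt3 u u * gram u w := by
      generalize hA : dt3 u u = A
      generalize hB : dt3 u w = B
      have : dt3 (A • w - B • u) (A • w - B • u) = A^2 * dt3 w w - 2*A*B*dt3 u w + B^2*dt3 u u := by
        simp [dt3]; ring
      rw [this, gram, hA, hB]; ring
    rw [e, h, mul_zero] at this
    exact lt_irrefl _ this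
  funext i
  have := congrFun this i
  simp at this
  simp only [Pi.smul_apply, smul_eq_mul]
  field_simp
  linear_combination this

lemma sub3_eq_zero {x y : Pt3} (h : sub3 x y = 0) : x = y := by
  ext i
  have := congrFun h i
  simp [sub3] at this
  linarith

lemma cop4 (c1 c2 c3 c4 : Pt3) (r1 r2 r3 r4 : ℝ)
    (hr1 : 0 < r1) (hr2 : 0 < r2) (hr3 : 0 < r3) (hr4 : 0 < r4) (a b : ℝ)
    (hd : sub3 c3 c4 = a • sub3 c1 c4 + b • sub3 c2 c4)
    (hg : 0 < gram (sub3 c1 c4) (sub3 c2 c4))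
    (hab : a + b ≠ 1) (h00 : ¬ (a = 0 ∧ b = 0)) (h10 : ¬ (a = 1 ∧ b = 0)) (h01 : ¬ (a = 0 ∧ b = 1)) :
    (CT4 c1 c2 c3 c4 r1 r2 r3 r4).encard ≤ 12 := by
  obtain ⟨K, hK⟩ := reduction c1 c2 c3 c4 r1 r2 r3 r4 hr1 hr2 hr3 hr4
  exact (Set.encard_le_encard hK).trans
    (coplanar_case (dvec c1 c2 c3 c4) K r4 c4 hr4 a b hd hg hab h00 h10 h01)

lemma copl (c1 c2 c3 c4 : Pt3) (r1 r2 r3 r4 : ℝ)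
    (hr1 : 0 < r1) (hr2 : 0 < r2) (hr3 : 0 < r3) (hr4 : 0 < r4)
    (n13 : c1 ≠ c3) (n23 : c2 ≠ c3) (n34 : c3 ≠ c4)
    (hg : 0 < gram (sub3 c1 c4) (sub3 c2 c4))
    (hd : dt3 (crs (sub3 c1 c4) (sub3 c2 c4)) (sub3 c3 c4) = 0) :
    (CT4 c1 c2 c3 c4 r1 r2 r3 r4).encard ≤ 12 := by
  obtain ⟨a, b, h⟩ := gram_dec _ _ _ hg hd
  have h00 : ¬ (a = 0 ∧ b = 0) := by
    rintro ⟨rfl, rfl⟩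
    apply n34
    apply sub3_eq_zero
    rw [h]; simp
  have h10 : ¬ (a = 1 ∧ b = 0) := by
    rintro ⟨rfl, rfl⟩
    apply n13
    ext i
    have := congrFun h i
    simp [sub3] at this
    linarith
  have h01 : ¬ (a = 0 ∧ b = 1) := by
    rintro ⟨rfl, rfl⟩
    apply n23
    ext i
    have := congrFun h i
    simp [sub3] at this
    linarith
  by_cases hab : a + b = 1
  · have ha : a = 1 - b := by linarith
    have hp := cop4 c4 c2 c3 c1 r4 r2 r3 r1 hr4 hr2 hr3 hr1 0 b ?_ ?_ ?_ ?_ ?_ ?_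
    · refine (Set.encard_le_encard ?_).trans hp
      rintro l ⟨h, t1, t2, t3, t4⟩
      exact ⟨h, t4, t2, t3, t1⟩
    · funext i
      have := congrFun h i
      rw [ha] at this
      simp [sub3] at this ⊢
      linear_combination this
    · have : gram (sub3 c4 c1) (sub3 c2 c1) = gram (sub3 c1 c4) (sub3 c2 c4) := by
        simp [gram, dt3, sub3]; ring
      rw [this]; exact hg
    · intro hb; exact h01 ⟨by linarith, by linarith⟩
    · rintro ⟨-, hb⟩; exact h10 ⟨by linarith, hb⟩
    · rintro ⟨h, -⟩; norm_num at h
    · rintro ⟨-, hb⟩; exact h01 ⟨by linarith, hb⟩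
  · exact cop4 c1 c2 c3 c4 r1 r2 r3 r4 hr1 hr2 hr3 hr4 a b h hg hab h00 h10 h01

theorem four_spheres_common_tangent_lines
    (c1 c2 c3 c4 : Pt3) (r1 r2 r3 r4 : ℝ)
    (hr1 : 0 < r1) (hr2 : 0 < r2) (hr3 : 0 < r3) (hr4 : 0 < r4)
    (h12 : Metric.sphere c1 r1 ≠ Metric.sphere c2 r2)
    (h13 : Metric.sphere c1 r1 ≠ Metric.sphere c3 r3)
    (h14 : Metric.sphere c1 r1 ≠ Metric.sphere c4 r4)
    (h23 : Metric.sphere c2 r2 ≠ Metric.sphere c3 r3)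
    (h24 : Metric.sphere c2 r2 ≠ Metric.sphere c4 r4)
    (h34 : Metric.sphere c3 r3 ≠ Metric.sphere c4 r4)
    (hnc : ¬ Collinear ℝ ({c1, c2, c3, c4} : Set Pt3)) :
    ({l : Set Pt3 | IsLine3 l ∧ Tangent3 l (Metric.sphere c1 r1) ∧
        Tangent3 l (Metric.sphere c2 r2) ∧ Tangent3 l (Metric.sphere c3 r3) ∧
        Tangent3 l (Metric.sphere c4 r4)}).encard ≤ 12 := by
  change (CT4 c1 c2 c3 c4 r1 r2 r3 r4).encard ≤ 12
  rcases Set.eq_empty_or_nonempty (CT4 c1 c2 c3 c4 r1 r2 r3 r4) with he | ⟨l, hl, t1, t2, t3, t4⟩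
  · rw [he]; simp
  have hne : ∀ c c' ρ σ, 0 < ρ → 0 < σ → Metric.sphere c ρ ≠ Metric.sphere c' σ →
      Tangent3 l (Metric.sphere c ρ) → Tangent3 l (Metric.sphere c' σ) → c ≠ c' := by
    rintro c c' ρ σ hρ hσ h ha hb rfl
    exact h (by rw [same_center l hl c ρ σ hρ hσ ha hb])
  have n13 := hne c1 c3 r1 r3 hr1 hr3 h13 t1 t3
  have n14 := hne c1 c4 r1 r4 hr1 hr4 h14 t1 t4
  have n23 := hne c2 c3 r2 r3 hr2 hr3 h23 t2 t3
  have n34 := hne c3 c4 r3 r4 hr3 hr4 h34 t3 t4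
  have n12 := hne c1 c2 r1 r2 hr1 hr2 h12 t1 t2
  have n24 := hne c2 c4 r2 r4 hr2 hr4 h24 t2 t4
  by_cases hdet : (Matrix.of (dvec c1 c2 c3 c4)).det = 0
  · have hd : dt3 (crs (sub3 c1 c4) (sub3 c2 c4)) (sub3 c3 c4) = 0 := by
      rw [← hdet, Matrix.det_fin_three]
      simp [dt3, crs, dvec]; ring
    have hd' : dt3 (crs (sub3 c1 c4) (sub3 c3 c4)) (sub3 c2 c4) = 0 := by
      have : dt3 (crs (sub3 c1 c4) (sub3 c3 c4)) (sub3 c2 c4) =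
        - dt3 (crs (sub3 c1 c4) (sub3 c2 c4)) (sub3 c3 c4) := by
        simp [dt3, crs]; ring
      rw [this, hd, neg_zero]
    by_cases g2 : gram (sub3 c1 c4) (sub3 c2 c4) = 0
    · by_cases g3 : gram (sub3 c1 c4) (sub3 c3 c4) = 0
      · exfalso
        apply hnc
        have hu : sub3 c1 c4 ≠ 0 := fun h => n14 (sub3_eq_zero h)
        obtain ⟨a, ha⟩ := gram_zero _ _ hu g2
        obtain ⟨b, hb⟩ := gram_zero _ _ hu g3
        rw [collinear_iff_of_mem (p₀ := c4) (by simp)]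
        refine ⟨c1 - c4, ?_⟩
        have lift : ∀ (c : Pt3) (s : ℝ), sub3 c c4 = s • sub3 c1 c4 → c = s • (c1 - c4) +ᵥ c4 := by
          intro c s h
          ext i
          have := congrFun h i
          simp [sub3] at this ⊢
          linarith
        rintro p (rfl | rfl | rfl | rfl)
        · exact ⟨1, lift _ _ (by simp)⟩
        · exact ⟨a, lift _ _ ha⟩
        · exact ⟨b, lift _ _ hb⟩
        · exact ⟨0, by simp⟩
      · have := copl c1 c3 c2 c4 r1 r3 r2 r4 hr1 hr3 hr2 hr4 n12 n23.symm n24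
          (lt_of_le_of_ne (gram_nonneg _ _) (Ne.symm g3)) hd'
        refine (Set.encard_le_encard ?_).trans this
        rintro l ⟨h, t1, t2, t3, t4⟩
        exact ⟨h, t1, t3, t2, t4⟩
    · exact copl c1 c2 c3 c4 r1 r2 r3 r4 hr1 hr2 hr3 hr4 n13 n23 n34
          (lt_of_le_of_ne (gram_nonneg _ _) (Ne.symm g2)) hd
  · obtain ⟨K, hK⟩ := reduction c1 c2 c3 c4 r1 r2 r3 r4 hr1 hr2 hr3 hr4
    exact (Set.encard_le_encard hK).trans (tetra_case (dvec c1 c2 c3 c4) K r4 c4 hdet)
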